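/- Let (a_n)_{n≥1} be a sequence of complex numbers with ∑_{n=1}^∞ |a_n| < ∞, and define f(x) = ∑_{n=1}^∞ (a_n / sinh(πn/2)) · Im[J_{in/2}(x)²] for x > 0 (this series converges absolutely for each x > 0). Then for every n ≥ 1 the integral ∫₀^∞ Ω_n(x) f(x) dx converges absolutely and a_n = sinh(πn) · ∫₀^∞ Ω_n(x) f(x) dx, where Ω_n(x) = ∫₀^π (x·K₀ˢ(2x·cosh u) − 1/(π·cosh u)) · sinh(2u) · sin(nu) du. -/

import Mathlib

open MeasureTheory Filter Topology

/-- Bessel function of the first kind of complex order `ν` at real `x > 0`. -/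
noncomputable def besselJ (ν : ℂ) (x : ℝ) : ℂ :=
  ∑' k : ℕ, ((-1 : ℂ) ^ k * Complex.exp ((ν + 2 * k) * (Real.log (x / 2) : ℂ))) /
    ((Nat.factorial k : ℂ) * Complex.Gamma (ν + k + 1))

/-- Bessel function of the second kind of complex order `ν` at real `x > 0`. -/
noncomputable def besselY (ν : ℂ) (x : ℝ) : ℂ :=
  (besselJ ν x * Complex.cos (Real.pi * ν) - besselJ (-ν) x) / Complex.sin (Real.pi * ν)

/-- Bessel function of the first kind of order `0` (real-valued). -/
noncomputable def besselJ0 (x : ℝ) : ℝ :=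
  ∑' k : ℕ, (-1 : ℝ) ^ k * (x / 2) ^ (2 * k) / (Nat.factorial k : ℝ) ^ 2

/-- Lommel function `S_{-1,0}` for `x > 0`. -/
noncomputable def lommelS (x : ℝ) : ℝ :=
  ∫ t in Set.Ioi (0 : ℝ), t * Real.exp (-x * Real.sinh t)

/-- Struve function `K₀` for `x > 0`. -/
noncomputable def struveK0 (x : ℝ) : ℝ :=
  (2 / Real.pi) * ∫ t in Set.Ioi (0 : ℝ), Real.exp (-x * Real.sinh t)

/-- Bessel function of the second kind of order `0` (real-valued, for `x > 0`). -/
noncomputable def besselY0 (x : ℝ) : ℝ :=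
  (2 / Real.pi) * ((Real.log (x / 2) + Real.eulerMascheroniConstant) * besselJ0 x +
    ∑' k : ℕ, (-1 : ℝ) ^ k * ((harmonic (k + 1) : ℚ) : ℝ) * (x / 2) ^ (2 * (k + 1)) /
      (Nat.factorial (k + 1) : ℝ) ^ 2)

/-- Struve function `H₀`: `H₀ = K₀ˢ + Y₀`. -/
noncomputable def struveH0 (x : ℝ) : ℝ := struveK0 x + besselY0 x

noncomputable def bc (ν : ℂ) (k : ℕ) : ℂ :=
  (-1 : ℂ) ^ k / ((Nat.factorial k : ℂ) * Complex.Gamma (ν + k + 1))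

noncomputable def bg (ν : ℂ) (z : ℝ) : ℂ := ∑' k : ℕ, bc ν k * (z : ℂ) ^ k

lemma gamma_ne {ν : ℂ} (h : 0 ≤ ν.re) (k : ℕ) : Complex.Gamma (ν + k + 1) ≠ 0 := by
  apply Complex.Gamma_ne_zero_of_re_pos
  simp
  positivity

lemma gamma_step {ν : ℂ} (h : 0 ≤ ν.re) (k : ℕ) :
    Complex.Gamma (ν + (k + 1 : ℕ) + 1) = (ν + k + 1) * Complex.Gamma (ν + k + 1) := by
  rw [← Complex.Gamma_add_one]
  · push_cast; ring_nf
  · intro h0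
    have := congrArg Complex.re h0
    simp at this
    have h2 : (0:ℝ) ≤ k := by positivity
    linarith

lemma gamma_lb {ν : ℂ} (h : 0 ≤ ν.re) (k : ℕ) :
    ‖Complex.Gamma (ν + 1)‖ ≤ ‖Complex.Gamma (ν + k + 1)‖ := by
  induction k with
  | zero => simp
  | succ k ih =>
    rw [gamma_step h, norm_mul]
    have h1 : 1 ≤ ‖ν + k + 1‖ := by
      have := Complex.re_le_norm (ν + k + 1)
      simp at this
      have h2 : (0:ℝ) ≤ k := by positivity
      linarith
    nlinarith [norm_nonneg (Complex.Gamma (ν + k + 1))]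

lemma bc_le {ν : ℂ} (h : 0 ≤ ν.re) (k : ℕ) :
    ‖bc ν k‖ ≤ ‖Complex.Gamma (ν + 1)‖⁻¹ / (Nat.factorial k : ℝ) := by
  have h0 : 0 < ‖Complex.Gamma (ν + 1)‖ := by
    have := gamma_ne h 0
    simpa using this
  unfold bc
  rw [norm_div, norm_mul]
  simp only [norm_pow, norm_neg, norm_one, one_pow, Complex.norm_natCast]
  rw [div_eq_mul_inv, mul_inv, div_eq_mul_inv, one_mul, mul_comm]
  gcongr
  exact gamma_lb h k

lemma bc_succ {ν : ℂ} (h : 0 ≤ ν.re) (k : ℕ) :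
    bc ν (k + 1) * (k + 1 : ℂ) = - bc (ν + 1) k := by
  unfold bc
  have h1 := gamma_ne h (k+1)
  have h2 : ν + 1 + k + 1 = ν + (k + 1 : ℕ) + 1 := by push_cast; ring
  rw [h2]
  have h3 : (k + 1 : ℂ) ≠ 0 := by exact_mod_cast Nat.succ_ne_zero k
  have h4 : ((Nat.factorial k : ℕ) : ℂ) ≠ 0 := by exact_mod_cast Nat.factorial_ne_zero k
  rw [Nat.factorial_succ]
  push_cast at *
  field_simp
  ring

lemma bc_nu {ν : ℂ} (h : 0 ≤ ν.re) (k : ℕ) :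
    bc ν k = (ν + k + 1) * bc (ν + 1) k := by
  unfold bc
  have h1 := gamma_ne h (k+1)
  have h2 : ν + 1 + k + 1 = ν + (k + 1 : ℕ) + 1 := by push_cast; ring
  rw [h2]
  rw [gamma_step h] at *
  have h4 : ((Nat.factorial k : ℕ) : ℂ) ≠ 0 := by exact_mod_cast Nat.factorial_ne_zero k
  have h5 := left_ne_zero_of_mul h1
  have h6 := right_ne_zero_of_mul h1
  field_simp

lemma bg_summable {ν : ℂ} (h : 0 ≤ ν.re) (z : ℝ) :
    Summable fun k => bc ν k * (z : ℂ) ^ k := by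
  apply Summable.of_norm_bounded
    (g := fun k => ‖Complex.Gamma (ν + 1)‖⁻¹ * (|z| ^ k / (Nat.factorial k : ℝ)))
  · exact (Real.summable_pow_div_factorial |z|).mul_left _
  · intro k
    rw [norm_mul, norm_pow, Complex.norm_real, Real.norm_eq_abs]
    calc _ ≤ ‖Complex.Gamma (ν + 1)‖⁻¹ / (Nat.factorial k : ℝ) * |z| ^ k := by
          gcongr; exact bc_le h k
      _ = _ := by ring

lemma bg_hasDerivAt {ν : ℂ} (h : 0 ≤ ν.re) (z : ℝ) :
    HasDerivAt (bg ν) (-(bg (ν + 1) z)) z := by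
  set R : ℝ := |z| + 1
  have hR : 0 < R := by positivity
  set C := ‖Complex.Gamma (ν + 1)‖⁻¹
  have hC : 0 ≤ C := by positivity
  have hs : Summable (fun k : ℕ => C * ((k:ℝ) * R ^ (k - 1) / (Nat.factorial k : ℝ))) := by
    apply Summable.mul_left
    rw [← summable_nat_add_iff 1]
    refine (Real.summable_pow_div_factorial R).congr ?_
    intro k
    rw [Nat.factorial_succ]
    push_cast
    have h4 : ((Nat.factorial k : ℕ) : ℝ) ≠ 0 := by exact_mod_cast Nat.factorial_ne_zero k
    field_simp
  have key := hasDerivAt_tsum_of_isPreconnected (𝕜 := ℝ) (F := ℂ)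
    (g := fun (k : ℕ) (y : ℝ) => bc ν k * (y : ℂ) ^ k)
    (g' := fun (k : ℕ) (y : ℝ) => bc ν k * ((k : ℂ) * (y : ℂ) ^ (k - 1))) (t := Metric.ball (0:ℝ) R)
    (y₀ := 0) (y := z) hs Metric.isOpen_ball (convex_ball _ _).isPreconnected ?_ ?_ ?_ ?_ ?_
  · have he : ∑' k : ℕ, bc ν k * ((k : ℂ) * (z : ℂ) ^ (k - 1)) = - bg (ν + 1) z := by
      have hs2 : Summable (fun k : ℕ => bc ν k * ((k : ℂ) * (z : ℂ) ^ (k - 1))) := by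
        rw [← summable_nat_add_iff 1]
        refine ((bg_summable (ν := ν + 1) (by simp; linarith) z).neg).congr ?_
        intro k
        have := bc_succ h k
        push_cast
        try simp only [Nat.add_sub_cancel]
        rw [← mul_assoc, this]; ring
      rw [hs2.tsum_eq_zero_add]
      unfold bg
      rw [← tsum_neg]
      simp only [Nat.cast_zero, zero_mul, mul_zero, zero_add]
      congr 1; ext k
      have := bc_succ h k
      push_cast
      try simp only [Nat.add_sub_cancel]
      rw [← mul_assoc, this]; ring
    rw [he] at key
    exact key
  · intro k y _
    apply HasDerivAt.const_mul
    have := (hasDerivAt_pow k (y : ℂ)).comp_ofReal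
    exact this
  · intro k y hy
    simp only [Metric.mem_ball, dist_zero_right, Real.norm_eq_abs] at hy
    simp only [norm_mul, norm_pow, Complex.norm_real, Real.norm_eq_abs, Complex.norm_natCast]
    calc _ ≤ C / (Nat.factorial k : ℝ) * ((k:ℝ) * R ^ (k-1)) := by
          gcongr; exact bc_le h k
      _ = _ := by ring
  · simp [hR]
  · exact bg_summable h 0
  · simp [R]

lemma bg_rec {ν : ℂ} (h : 0 ≤ ν.re) (z : ℝ) :
    bg ν z = (ν + 1) * bg (ν + 1) z - z * bg (ν + 2) z := by
  have h1 : 0 ≤ (ν + 1).re := by simp; linarith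
  have h2 : 0 ≤ (ν + 1 + 1).re := by simp; linarith
  have e2 : ν + 2 = ν + 1 + 1 := by ring
  rw [e2]
  have hs2 : Summable (fun k : ℕ => bc (ν + 1) k * ((k : ℂ) * (z : ℂ) ^ k)) := by
    rw [← summable_nat_add_iff 1]
    refine ((bg_summable h2 z).mul_left (-(z:ℂ))).congr ?_
    intro k
    have := bc_succ h1 k
    push_cast
    rw [← mul_assoc (bc _ _), this]; ring
  have e3 : ∑' k : ℕ, bc (ν + 1) k * ((k : ℂ) * (z : ℂ) ^ k) = -(z:ℂ) * bg (ν + 1 + 1) z := by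
    rw [hs2.tsum_eq_zero_add]
    unfold bg
    rw [← tsum_mul_left]
    simp only [Nat.cast_zero, zero_mul, mul_zero, zero_add]
    congr 1; ext k
    have := bc_succ h1 k
    push_cast
    rw [← mul_assoc (bc _ _), this]; ring
  have e4 : bg ν z = (ν+1) * bg (ν+1) z + ∑' k : ℕ, bc (ν + 1) k * ((k : ℂ) * (z : ℂ) ^ k) := by
    unfold bg
    rw [← tsum_mul_left, ← Summable.tsum_add ((bg_summable h1 z).mul_left _) hs2]
    congr 1; ext k
    rw [bc_nu h k]; ring
  rw [e4, e3]; ring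

lemma besselJ_eq (ν : ℂ) {x : ℝ} (hx : 0 < x) :
    besselJ ν x = Complex.exp (ν * (Real.log (x / 2) : ℂ)) * bg ν (x ^ 2 / 4) := by
  unfold besselJ bg
  rw [← tsum_mul_left]
  congr 1; ext k
  have : Complex.exp ((ν + 2 * k) * (Real.log (x / 2) : ℂ)) =
      Complex.exp (ν * (Real.log (x / 2) : ℂ)) * ((x ^ 2 / 4 : ℝ) : ℂ) ^ k := by
    rw [add_mul, Complex.exp_add]
    congr 1
    have h2 : (2 * (k:ℂ)) * (Real.log (x / 2) : ℂ) = k * (2 * Real.log (x/2) : ℝ) := by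
      push_cast; ring
    rw [h2, Complex.exp_nat_mul, ← Complex.ofReal_exp]
    congr 2
    rw [two_mul, Real.exp_add, Real.exp_log (by positivity)]; ring
  rw [this]; unfold bc; ring

noncomputable def bv (ν : ℂ) (x : ℝ) : ℂ :=
  Complex.exp (ν * (Real.log (x / 2) : ℂ)) *
    (ν * bg ν (x ^ 2 / 4) - (x^2/2 : ℝ) * bg (ν + 1) (x ^ 2 / 4))

lemma hasDerivAt_pref (ν : ℂ) {x : ℝ} (hx : 0 < x) :
    HasDerivAt (fun x : ℝ => Complex.exp (ν * (Real.log (x / 2) : ℂ)))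
      (Complex.exp (ν * (Real.log (x / 2) : ℂ)) * (ν / x)) x := by
  have h1 : HasDerivAt (fun x : ℝ => Real.log (x / 2)) (1/x) x := by
    have := ((hasDerivAt_id x).div_const 2).log (by simp; positivity)
    refine this.congr_deriv ?_
    simp; field_simp
  have h2 := (h1.ofReal_comp.const_mul ν).cexp
  refine h2.congr_deriv ?_
  push_cast; ring

lemma hasDerivAt_bgc {ν : ℂ} (h : 0 ≤ ν.re) (x : ℝ) :
    HasDerivAt (fun x : ℝ => bg ν (x^2/4)) (-(x/2 : ℝ) * bg (ν+1) (x^2/4)) x := by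
  have h1 : HasDerivAt (fun x : ℝ => x^2/4) (x/2) x := by
    have := (hasDerivAt_pow 2 x).div_const 4
    refine this.congr_deriv ?_
    simp; ring
  have := (bg_hasDerivAt h (x^2/4)).scomp x h1
  refine this.congr_deriv ?_
  simp

lemma besselJ_hasDerivAt {ν : ℂ} (h : 0 ≤ ν.re) {x : ℝ} (hx : 0 < x) :
    HasDerivAt (besselJ ν) (bv ν x / x) x := by
  have h1 := (hasDerivAt_pref ν hx).mul (hasDerivAt_bgc h x)
  have h2 : HasDerivAt (besselJ ν) _ x := h1.congr_of_eventuallyEq (by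
    filter_upwards [Ioi_mem_nhds hx] with y hy
    exact besselJ_eq ν hy)
  refine h2.congr_deriv ?_
  unfold bv
  have : (x:ℂ) ≠ 0 := by exact_mod_cast hx.ne'
  push_cast
  field_simp
  ring

lemma bv_hasDerivAt {ν : ℂ} (h : 0 ≤ ν.re) {x : ℝ} (hx : 0 < x) :
    HasDerivAt (bv ν) ((ν^2 - x^2) * besselJ ν x / x) x := by
  have h' : 0 ≤ (ν+1).re := by simp; linarith
  have h3 : HasDerivAt (fun x : ℝ => ((x^2/2 : ℝ):ℂ)) (x : ℂ) x := by
    have : HasDerivAt (fun x : ℝ => x^2/2) x x := by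
      have := (hasDerivAt_pow 2 x).div_const 2
      refine this.congr_deriv ?_
      simp
    exact this.ofReal_comp
  have h1 := (hasDerivAt_pref ν hx).mul
    (((hasDerivAt_bgc h x).const_mul ν).sub (h3.mul (hasDerivAt_bgc h' x)))
  have h2 : HasDerivAt (bv ν) _ x := h1
  refine h2.congr_deriv ?_
  rw [besselJ_eq ν hx]
  simp only [Pi.sub_apply, Pi.mul_apply]
  have hr := bg_rec h (x^2/4)
  have e2 : ν + 2 = ν + 1 + 1 := by ring
  rw [e2] at hr
  rw [hr]
  have : (x:ℂ) ≠ 0 := by exact_mod_cast hx.ne'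
  push_cast
  field_simp
  ring

noncomputable def bK (t : ℝ) : ℝ := 2 * (Real.sinh (Real.pi * t) / (Real.pi * t))

lemma re_tI (t : ℝ) : (0:ℝ) ≤ ((t:ℂ) * Complex.I).re := by simp

lemma bg_zero (ν : ℂ) : bg ν 0 = (Complex.Gamma (ν + 1))⁻¹ := by
  unfold bg
  rw [tsum_eq_single 0]
  · simp [bc]
  · intro k hk
    simp [hk]

lemma normsq_gamma {t : ℝ} (ht : 0 < t) :
    ‖Complex.Gamma ((t:ℂ) * Complex.I + 1)‖ ^ 2 = Real.pi * t / Real.sinh (Real.pi * t) := by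
  have h1 := Complex.Gamma_mul_Gamma_one_sub ((t:ℂ) * Complex.I)
  have hne : (t:ℂ) * Complex.I ≠ 0 := by
    simp [ht.ne']
  have h2 := Complex.Gamma_add_one _ hne
  have h3 : (starRingEnd ℂ) ((t:ℂ) * Complex.I + 1) = 1 - (t:ℂ) * Complex.I := by
    simp; ring
  have h4 : Complex.Gamma (1 - (t:ℂ) * Complex.I) =
      (starRingEnd ℂ) (Complex.Gamma ((t:ℂ) * Complex.I + 1)) := by
    rw [← h3, Complex.Gamma_conj]
  have h5 : Complex.Gamma ((t:ℂ) * Complex.I + 1) *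
      (starRingEnd ℂ) (Complex.Gamma ((t:ℂ) * Complex.I + 1)) =
      ((Real.pi * t / Real.sinh (Real.pi * t) : ℝ) : ℂ) := by
    rw [← h4, h2, mul_assoc, h1]
    have : (Real.pi : ℂ) * ((t:ℂ) * Complex.I) = ((Real.pi * t : ℝ) : ℂ) * Complex.I := by
      push_cast; ring
    rw [this, Complex.sin_mul_I]
    push_cast
    have hs : Complex.sinh ((Real.pi:ℂ) * t) ≠ 0 := by
      have : Real.sinh (Real.pi * t) ≠ 0 := by
        have := Real.sinh_pos_iff.2 (mul_pos Real.pi_pos ht)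
        exact this.ne'
      exact_mod_cast this
    field_simp
  rw [Complex.mul_conj, Complex.normSq_eq_norm_sq] at h5
  exact_mod_cast h5

lemma norm_pref (t x : ℝ) : ‖Complex.exp (((t:ℂ) * Complex.I) * (Real.log (x / 2) : ℂ))‖ = 1 := by
  have : ((t:ℂ) * Complex.I) * (Real.log (x / 2) : ℂ) =
    ((t * Real.log (x/2) : ℝ) : ℂ) * Complex.I := by push_cast; ring
  rw [this, Complex.norm_exp_ofReal_mul_I]

lemma bg_cont {ν : ℂ} (h : 0 ≤ ν.re) : Continuous (bg ν) :=
  continuous_iff_continuousAt.2 fun z => (bg_hasDerivAt h z).continuousAt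

noncomputable def bE (t x : ℝ) : ℝ :=
  ‖bv ((t:ℂ) * Complex.I) x‖ ^ 2 / (x ^ 2 + t ^ 2) + ‖besselJ ((t:ℂ) * Complex.I) x‖ ^ 2

lemma bE_hasDerivAt {t : ℝ} (ht : 0 < t) {x : ℝ} (hx : 0 < x) :
    HasDerivAt (bE t) (- (2 * x * ‖bv ((t:ℂ) * Complex.I) x‖ ^ 2 / (x^2 + t^2)^2)) x := by
  have hJ := besselJ_hasDerivAt (re_tI t) hx
  have hv := bv_hasDerivAt (re_tI t) hx
  set v := bv ((t:ℂ) * Complex.I)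
  set J := besselJ ((t:ℂ) * Complex.I)
  have hJ' : v x / x = (1/x : ℝ) • v x := by
    rw [Complex.real_smul]; push_cast; ring
  have hv' : (((t:ℂ) * Complex.I)^2 - x^2) * J x / x = (-(x^2+t^2)/x : ℝ) • J x := by
    rw [Complex.real_smul]; push_cast; rw [mul_pow, Complex.I_sq]; ring
  rw [hJ'] at hJ
  rw [hv'] at hv
  have h1 : HasDerivAt (fun x : ℝ => x^2 + t^2) (2 * x) x := by
    have := (hasDerivAt_pow 2 x).add_const (t^2)
    refine this.congr_deriv ?_
    simp
  have hpos : 0 < x^2 + t^2 := by positivity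
  have h2 := ((hv.norm_sq).div h1 hpos.ne').add (hJ.norm_sq)
  refine HasDerivAt.congr_deriv h2 ?_
  rw [real_inner_smul_right, real_inner_smul_right, real_inner_comm (J x) (v x)]
  field_simp
  ring

lemma bE_tendsto {t : ℝ} (ht : 0 < t) : Tendsto (bE t) (𝓝[>] 0) (𝓝 (bK t)) := by
  have c1 := bg_cont (re_tI t)
  have c2 : Continuous (bg ((t:ℂ) * Complex.I + 1)) := bg_cont (by simp)
  have hc : ContinuousAt (fun x : ℝ => ‖((t:ℂ) * Complex.I) * bg ((t:ℂ) * Complex.I) (x ^ 2 / 4) -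
      (x^2/2 : ℝ) * bg ((t:ℂ) * Complex.I + 1) (x ^ 2 / 4)‖ ^ 2 / (x ^ 2 + t ^ 2) +
      ‖bg ((t:ℂ) * Complex.I) (x^2/4)‖ ^ 2) 0 := by
    apply ContinuousAt.add
    · apply ContinuousAt.div
      · have : Continuous fun x : ℝ => ‖((t:ℂ) * Complex.I) * bg ((t:ℂ) * Complex.I) (x ^ 2 / 4) -
          (x^2/2 : ℝ) * bg ((t:ℂ) * Complex.I + 1) (x ^ 2 / 4)‖ ^ 2 := by fun_prop
        exact this.continuousAt
      · fun_prop
      · positivity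
    · have : Continuous fun x : ℝ => ‖bg ((t:ℂ) * Complex.I) (x^2/4)‖ ^ 2 := by fun_prop
      exact this.continuousAt
  have h1 := hc.tendsto.mono_left (nhdsWithin_le_nhds (s := Set.Ioi 0))
  have e : bK t = ‖((t:ℂ) * Complex.I) * bg ((t:ℂ) * Complex.I) ((0:ℝ) ^ 2 / 4) -
      ((0:ℝ)^2/2 : ℝ) * bg ((t:ℂ) * Complex.I + 1) ((0:ℝ) ^ 2 / 4)‖ ^ 2 / ((0:ℝ) ^ 2 + t ^ 2) +
      ‖bg ((t:ℂ) * Complex.I) ((0:ℝ)^2/4)‖ ^ 2 := by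
    have z : ((0:ℝ)^2/4) = 0 := by simp
    rw [z, bg_zero]
    simp only [ne_eq, OfNat.ofNat_ne_zero, not_false_eq_true, zero_pow, zero_div, Complex.ofReal_zero, zero_mul, sub_zero,
      norm_mul, Complex.norm_real, Complex.norm_I, norm_inv, mul_one, zero_add, mul_pow, inv_pow, normsq_gamma ht]
    unfold bK
    rw [Real.norm_of_nonneg ht.le]
    field_simp
    ring
  rw [e]
  refine h1.congr' ?_
  filter_upwards [self_mem_nhdsWithin] with x hx
  unfold bE
  rw [besselJ_eq _ hx, bv, norm_mul, norm_mul, norm_pref, one_mul, one_mul]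

lemma bE_le {t : ℝ} (ht : 0 < t) {x : ℝ} (hx : 0 < x) : bE t x ≤ bK t := by
  have hanti : AntitoneOn (bE t) (Set.Ioi 0) := by
    apply antitoneOn_of_deriv_nonpos (convex_Ioi 0)
    · intro y hy
      exact (bE_hasDerivAt ht hy).continuousAt.continuousWithinAt
    · intro y hy
      rw [interior_Ioi] at hy
      exact (bE_hasDerivAt ht hy).differentiableAt.differentiableWithinAt
    · intro y hy
      rw [interior_Ioi] at hy
      rw [(bE_hasDerivAt ht hy).deriv]
      have : 0 < y := hy
      have : 0 ≤ (2 * y * ‖bv ((t:ℂ) * Complex.I) y‖ ^ 2 / (y^2 + t^2)^2) := by positivity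
      linarith
  apply ge_of_tendsto (bE_tendsto ht)
  filter_upwards [Ioo_mem_nhdsGT hx] with y hy
  exact hanti hy.1 hx hy.2.le

lemma bK_nonneg {t : ℝ} (ht : 0 < t) : 0 ≤ bK t := by
  unfold bK
  have := Real.sinh_pos_iff.2 (mul_pos Real.pi_pos ht)
  positivity

lemma besselJ_sq_le {t : ℝ} (ht : 0 < t) {x : ℝ} (hx : 0 < x) :
    ‖besselJ ((t:ℂ) * Complex.I) x‖ ^ 2 ≤ bK t := by
  refine le_trans ?_ (bE_le ht hx)
  unfold bE
  have : 0 ≤ ‖bv ((t:ℂ) * Complex.I) x‖ ^ 2 / (x ^ 2 + t ^ 2) := by positivity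
  linarith

lemma besselJ_le {t : ℝ} (ht : 0 < t) {x : ℝ} (hx : 0 < x) :
    ‖besselJ ((t:ℂ) * Complex.I) x‖ ≤ √(bK t) :=
  Real.le_sqrt_of_sq_le (besselJ_sq_le ht hx)

lemma bv_le {t : ℝ} (ht : 0 < t) {x : ℝ} (hx : 0 < x) :
    ‖bv ((t:ℂ) * Complex.I) x‖ ≤ √(bK t) * (x + t) := by
  have h1 : ‖bv ((t:ℂ) * Complex.I) x‖ ^ 2 / (x ^ 2 + t ^ 2) ≤ bK t := by
    refine le_trans ?_ (bE_le ht hx)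
    unfold bE
    have : 0 ≤ ‖besselJ ((t:ℂ) * Complex.I) x‖ ^ 2 := by positivity
    linarith
  rw [div_le_iff₀ (by positivity)] at h1
  apply abs_le_of_sq_le_sq' _ (by positivity) |>.2
  rw [mul_pow, Real.sq_sqrt (bK_nonneg ht)]
  refine h1.trans ?_
  gcongr
  · exact bK_nonneg ht
  · nlinarith

lemma pow_exp_integrable (k : ℕ) {p : ℝ} (hp : 0 < p) :
    IntegrableOn (fun x : ℝ => x ^ k * Real.exp (-p * x)) (Set.Ioi 0) := by
  have := integrableOn_rpow_mul_exp_neg_mul_rpow (p := 1) (s := k) (b := p)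
    (by have : (0:ℝ) ≤ k := by positivity
        linarith) one_pos hp
  simpa using this

noncomputable def lapM (φ : ℝ → ℂ) (k : ℕ) (p : ℝ) : ℂ :=
  ∫ x in Set.Ioi (0:ℝ), ((x ^ k * Real.exp (-p * x) : ℝ) : ℂ) * φ x

lemma lapM_integrable {φ : ℝ → ℂ} {K : ℝ} (hφ : ContinuousOn φ (Set.Ioi 0))
    (hK : ∀ x, 0 < x → ‖φ x‖ ≤ K) (k : ℕ) {p : ℝ} (hp : 0 < p) :
    IntegrableOn (fun x : ℝ => ((x ^ k * Real.exp (-p * x) : ℝ) : ℂ) * φ x) (Set.Ioi 0) := by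
  have h := (pow_exp_integrable k hp).mul_const K
  refine Integrable.mono' h ?_ ?_
  · apply ContinuousOn.aestronglyMeasurable _ measurableSet_Ioi
    apply ContinuousOn.mul _ hφ
    fun_prop
  · filter_upwards [ae_restrict_mem measurableSet_Ioi] with x hx
    have hx : 0 < x := hx
    rw [norm_mul, Complex.norm_real, Real.norm_of_nonneg (by positivity)]
    gcongr
    exact hK x hx

lemma lapM_hasDerivAt {φ : ℝ → ℂ} {K : ℝ} (hφ : ContinuousOn φ (Set.Ioi 0))
    (hK : ∀ x, 0 < x → ‖φ x‖ ≤ K) (k : ℕ) {p : ℝ} (hp : 0 < p) :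
    HasDerivAt (lapM φ k) (- lapM φ (k+1) p) p := by
  have key := hasDerivAt_integral_of_dominated_loc_of_deriv_le
    (μ := volume.restrict (Set.Ioi (0:ℝ))) (x₀ := p) (s := Metric.ball p (p/2))
    (F := fun (p : ℝ) (x : ℝ) => ((x ^ k * Real.exp (-p * x) : ℝ) : ℂ) * φ x)
    (F' := fun (p : ℝ) (x : ℝ) => ((-(x ^ (k+1) * Real.exp (-p * x)) : ℝ) : ℂ) * φ x)
    (bound := fun x => x ^ (k+1) * Real.exp (-(p/2) * x) * K)
    (Metric.ball_mem_nhds _ (by positivity)) ?_ (lapM_integrable hφ hK k hp) ?_ ?_ ?_ ?_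
  · refine key.2.congr_deriv ?_
    unfold lapM
    rw [← integral_neg]
    congr 1; ext x; push_cast; ring
  · filter_upwards [] with q
    apply ContinuousOn.aestronglyMeasurable _ measurableSet_Ioi
    apply ContinuousOn.mul _ hφ
    fun_prop
  · apply ContinuousOn.aestronglyMeasurable _ measurableSet_Ioi
    apply ContinuousOn.mul _ hφ
    fun_prop
  · filter_upwards [ae_restrict_mem measurableSet_Ioi] with x hx q hq
    have hx : 0 < x := hx
    rw [norm_mul, Complex.norm_real, norm_neg, Real.norm_of_nonneg (by positivity)]
    have hq' : p/2 ≤ q := by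
      rw [Metric.mem_ball, Real.dist_eq, abs_lt] at hq
      linarith [hq.1]
    gcongr
    exact hK x hx
  · exact (pow_exp_integrable (k+1) (half_pos hp)).mul_const K
  · filter_upwards [ae_restrict_mem measurableSet_Ioi] with x hx q hq
    apply HasDerivAt.mul_const
    apply HasDerivAt.ofReal_comp
    have h1 : HasDerivAt (fun q : ℝ => -q * x) (-x) q := by
      have := (hasDerivAt_id q).neg.mul_const x
      refine this.congr_deriv ?_
      simp
    refine (h1.exp.const_mul (x^k)).congr_deriv ?_
    ring

lemma besselJ_contOn {ν : ℂ} (h : 0 ≤ ν.re) : ContinuousOn (besselJ ν) (Set.Ioi 0) :=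
  fun x hx => (besselJ_hasDerivAt h hx).continuousAt.continuousWithinAt

lemma lap_ode {t : ℝ} (ht : 0 < t) {p : ℝ} (hp : 0 < p) :
    ((p:ℂ)^2 + 1) * lapM (besselJ ((t:ℂ) * Complex.I)) 2 p
      - 3 * p * lapM (besselJ ((t:ℂ) * Complex.I)) 1 p
      + (1 + (t:ℂ)^2) * lapM (besselJ ((t:ℂ) * Complex.I)) 0 p = 0 := by
  set J := besselJ ((t:ℂ) * Complex.I) with hJdef
  set v := bv ((t:ℂ) * Complex.I) with hvdef
  have hI := fun k => lapM_integrable (besselJ_contOn (re_tI t)) (fun x hx => besselJ_le ht hx) k hp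
  set Q : ℝ → ℂ := fun x => (Real.exp (-p * x) : ℂ) * (x * v x - x * (1 - p * x) * J x) with hQ
  have hQd : ∀ x ∈ Set.Ioi (0:ℝ), HasDerivAt Q
      (-(((p:ℂ)^2 + 1) * (((x ^ 2 * Real.exp (-p * x) : ℝ) : ℂ) * J x)
        - 3 * p * (((x ^ 1 * Real.exp (-p * x) : ℝ) : ℂ) * J x)
        + (1 + (t:ℂ)^2) * (((x ^ 0 * Real.exp (-p * x) : ℝ) : ℂ) * J x))) x := by
    intro x hx
    have hx : 0 < x := hx
    have hJ := besselJ_hasDerivAt (re_tI t) hx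
    have hv := bv_hasDerivAt (re_tI t) hx
    rw [← hJdef, ← hvdef] at *
    have h1 : HasDerivAt (fun x : ℝ => Real.exp (-p * x)) (Real.exp (-p*x) * (-p)) x := by
      have := ((hasDerivAt_id x).const_mul (-p)).exp
      simpa using this
    have h2 : HasDerivAt (fun x : ℝ => (x : ℂ)) 1 x := Complex.ofRealCLM.hasDerivAt
    have h3 := h1.ofReal_comp.mul ((h2.mul hv).sub ((h2.mul ((h2.const_mul (p:ℂ)).const_sub 1)).mul hJ))
    refine HasDerivAt.congr_deriv h3 ?_
    simp only [Pi.mul_apply, Pi.sub_apply]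
    have hxc : (x:ℂ) ≠ 0 := by exact_mod_cast hx.ne'
    push_cast
    rw [mul_pow, Complex.I_sq]
    field_simp
    ring
  have hbound : ∀ x, 0 < x → ‖Q x‖ ≤ √(bK t) * (x ^ 1 * Real.exp (-p * x) * (t + 1) +
      x ^ 2 * Real.exp (-p * x) * (1 + p)) := by
    intro x hx
    have h1 := besselJ_le ht hx
    have h2 := bv_le ht hx
    rw [← hJdef, ← hvdef] at *
    rw [hQ]
    simp only
    rw [norm_mul, Complex.norm_real, Real.norm_of_nonneg (Real.exp_pos _).le]
    have h3 : ‖(x * v x - x * (1 - p * x) * J x : ℂ)‖ ≤ x * (√(bK t) * (x + t)) + x * (1 + p * x) * √(bK t) := by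
      refine (norm_sub_le _ _).trans ?_
      rw [norm_mul, norm_mul, norm_mul, Complex.norm_real, Real.norm_of_nonneg hx.le]
      have h4 : ‖(1 - p * x : ℂ)‖ ≤ 1 + p * x := by
        refine (norm_sub_le _ _).trans ?_
        rw [norm_mul, Complex.norm_real, Complex.norm_real, Real.norm_of_nonneg hx.le, Real.norm_of_nonneg hp.le]
        simp
      gcongr
    calc _ ≤ Real.exp (-p * x) * (x * (√(bK t) * (x + t)) + x * (1 + p * x) * √(bK t)) := by gcongr
      _ = _ := by ring
  have hpe : ∀ k : ℕ, Tendsto (fun x : ℝ => x ^ k * Real.exp (-p * x)) atTop (𝓝 0) := by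
    intro k
    have := tendsto_rpow_mul_exp_neg_mul_atTop_nhds_zero k p hp
    simpa using this
  have hinf : Tendsto Q atTop (𝓝 0) := by
    apply squeeze_zero_norm' (a := fun x => √(bK t) * (x ^ 1 * Real.exp (-p * x) * (t + 1) +
      x ^ 2 * Real.exp (-p * x) * (1 + p)))
    · filter_upwards [eventually_gt_atTop 0] with x hx using hbound x hx
    · have := (((hpe 1).mul_const (t+1)).add ((hpe 2).mul_const (1+p))).const_mul √(bK t)
      simpa using this
  have hQ0 : Q 0 = 0 := by simp [hQ]
  have hcont : ContinuousWithinAt Q (Set.Ici 0) 0 := by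
    unfold ContinuousWithinAt
    rw [hQ0]
    apply squeeze_zero_norm' (a := fun x => √(bK t) * (x ^ 1 * Real.exp (-p * x) * (t + 1) +
      x ^ 2 * Real.exp (-p * x) * (1 + p)))
    · filter_upwards [self_mem_nhdsWithin] with x hx
      rcases eq_or_lt_of_le (show (0:ℝ) ≤ x from hx) with h | h
      · rw [← h, hQ0]; simp
      · exact hbound x h
    · have : Continuous (fun x : ℝ => √(bK t) * (x ^ 1 * Real.exp (-p * x) * (t + 1) +
        x ^ 2 * Real.exp (-p * x) * (1 + p))) := by fun_prop
      have h2 := (this.tendsto 0).mono_left (nhdsWithin_le_nhds (s := Set.Ici 0))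
      simpa using h2
  have hint := ((((hI 2).const_mul ((p:ℂ)^2 + 1)).sub ((hI 1).const_mul (3 * (p:ℂ)))).add
      ((hI 0).const_mul (1 + (t:ℂ)^2)))
  have key := integral_Ioi_of_hasDerivAt_of_tendsto hcont hQd hint.neg hinf
  rw [integral_neg, integral_add, integral_sub, integral_const_mul, integral_const_mul, integral_const_mul, hQ0] at key
  · unfold lapM
    rw [sub_zero, neg_eq_zero] at key
    exact key
  · exact (hI 2).const_mul ((p:ℂ)^2 + 1)
  · exact (hI 1).const_mul (3 * (p:ℂ))
  · exact ((hI 2).const_mul ((p:ℂ)^2 + 1)).sub ((hI 1).const_mul (3 * (p:ℂ)))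
  · exact (hI 0).const_mul (1 + (t:ℂ)^2)

lemma lap_asymp {t : ℝ} (ht : 0 < t) :
    Tendsto (fun p : ℝ => (p:ℂ) * lapM (besselJ ((t:ℂ) * Complex.I)) 0 p *
      Complex.exp ((t:ℂ) * Complex.I * (Real.log (2 * p) : ℂ))) atTop (𝓝 1) := by
  set ν := (t:ℂ) * Complex.I with hν
  have hG : Complex.Gamma (ν + 1) ≠ 0 := by
    have := gamma_ne (re_tI t) 0
    simpa using this
  have e1 : (1:ℂ) = ∫ y in Set.Ioi (0:ℝ), (Real.exp (-y) : ℂ) *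
      (Complex.exp (ν * (Real.log y : ℂ)) * bg ν 0) := by
    have h1 : Complex.Gamma (ν + 1) = ∫ y in Set.Ioi (0:ℝ), (Real.exp (-y) : ℂ) *
      Complex.exp (ν * (Real.log y : ℂ)) := by
      rw [Complex.Gamma_eq_integral (by simp [hν]), Complex.GammaIntegral]
      apply setIntegral_congr_fun measurableSet_Ioi
      intro y hy
      have hy : 0 < y := hy
      simp only
      rw [Complex.cpow_def_of_ne_zero (by exact_mod_cast hy.ne'), ← Complex.ofReal_log hy.le]
      simp only [add_sub_cancel_right]
      rw [mul_comm ν]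
    simp_rw [← mul_assoc]
    rw [integral_mul_const, ← h1, bg_zero, mul_inv_cancel₀ hG]
  rw [e1]
  have e2 : ∀ p : ℝ, 0 < p → (p:ℂ) * lapM (besselJ ν) 0 p *
      Complex.exp (ν * (Real.log (2 * p) : ℂ)) =
      ∫ y in Set.Ioi (0:ℝ), (Real.exp (-y) : ℂ) *
      (Complex.exp (ν * (Real.log y : ℂ)) * bg ν (y^2 * (p⁻¹ ^ 2/ 4))) := by
    intro p hp
    have h1 := integral_comp_mul_left_Ioi' (fun y : ℝ => (Real.exp (-y) : ℂ) *
      (Complex.exp (ν * (Real.log y : ℂ)) * bg ν (y^2 * (p⁻¹ ^ 2/ 4)))) 0 hp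
    rw [mul_zero] at h1
    rw [← h1, Complex.real_smul]
    unfold lapM
    rw [mul_assoc, ← integral_mul_const]
    congr 1
    apply setIntegral_congr_fun measurableSet_Ioi
    intro x hx
    have hx : 0 < x := hx
    simp only
    rw [besselJ_eq _ hx]
    have e3 : Complex.exp (ν * (Real.log (p * x) : ℂ)) = Complex.exp (ν * (Real.log (x/2) : ℂ)) *
        Complex.exp (ν * (Real.log (2 * p) : ℂ)) := by
      rw [← Complex.exp_add, ← mul_add, ← Complex.ofReal_add, ← Real.log_mul (by positivity) (by positivity)]
      congr 4
      field_simp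
    have e4 : (p * x)^2 * (p⁻¹ ^ 2/ 4) = x^2/4 := by field_simp
    rw [e3, e4]
    simp only [pow_zero, one_mul, neg_mul]
    ring
  have hc := bg_cont (re_tI t)
  rw [← hν] at hc
  refine (tendsto_integral_filter_of_dominated_convergence (fun y => Real.exp (-y) * √(bK t)) ?_ ?_ ?_ ?_).congr' ?_ (f₁ := fun p => ∫ y in Set.Ioi (0:ℝ), (Real.exp (-y) : ℂ) *
      (Complex.exp (ν * (Real.log y : ℂ)) * bg ν (y^2 * (p⁻¹ ^ 2/ 4))))
  · filter_upwards [] with p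
    apply ContinuousOn.aestronglyMeasurable _ measurableSet_Ioi
    have : ContinuousOn (fun y : ℝ => Complex.exp (ν * (Real.log y : ℂ))) (Set.Ioi 0) := by
      apply ContinuousOn.cexp
      apply ContinuousOn.mul continuousOn_const
      apply Complex.continuous_ofReal.comp_continuousOn
      exact Real.continuousOn_log.mono (fun x hx => (ne_of_gt hx))
    apply ContinuousOn.mul
    · fun_prop
    · apply ContinuousOn.mul this
      apply Continuous.continuousOn
      fun_prop
  · filter_upwards [eventually_gt_atTop 0] with p hp
    filter_upwards [ae_restrict_mem measurableSet_Ioi] with y hy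
    have hy : 0 < y := hy
    rw [norm_mul, norm_mul, Complex.norm_real, Real.norm_of_nonneg (Real.exp_pos _).le]
    have h1 := norm_pref t (2 * y)
    have h2 : 2 * y / 2 = y := by ring
    rw [h2] at h1
    rw [h1, one_mul]
    have h3 := besselJ_le ht (show 0 < y * p⁻¹ by positivity)
    rw [besselJ_eq _ (by positivity), norm_mul, norm_pref, one_mul] at h3
    have e4 : y^2 * (p⁻¹ ^ 2/ 4) = (y * p⁻¹)^2/4 := by ring
    rw [e4]
    gcongr
  · have := pow_exp_integrable 0 one_pos
    simp only [pow_zero, one_mul, neg_mul] at this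
    exact this.mul_const _
  · filter_upwards [] with y
    apply Tendsto.const_mul
    apply Tendsto.const_mul
    have h1 : Tendsto (fun p : ℝ => y^2 * (p⁻¹ ^ 2/ 4)) atTop (𝓝 0) := by
      have h0 : Tendsto (fun p : ℝ => p⁻¹) atTop (𝓝 0) := tendsto_inv_atTop_zero
      have := ((h0.pow 2).div_const 4).const_mul (y^2)
      simpa using this
    exact (hc.tendsto 0).comp h1
  · filter_upwards [eventually_gt_atTop 0] with p hp
    exact (e2 p hp).symm

lemma sinh_log_tendsto : Tendsto (fun r : ℝ => r - Real.log (2 * Real.sinh r)) atTop (𝓝 0) := by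
  have h1 : Tendsto (fun r : ℝ => 1 - Real.exp (-(2 * r))) atTop (𝓝 1) := by
    have h0 : Tendsto (fun r : ℝ => Real.exp (-(2*r))) atTop (𝓝 0) :=
      Real.tendsto_exp_neg_atTop_nhds_zero.comp (tendsto_id.const_mul_atTop (by norm_num : (0:ℝ) < 2))
    simpa using h0.const_sub 1
  have h2 := (h1.log one_ne_zero).neg
  rw [Real.log_one, neg_zero] at h2
  refine h2.congr' ?_
  filter_upwards [eventually_gt_atTop 0] with r hr
  have h3 : 2 * Real.sinh r = Real.exp r * (1 - Real.exp (-(2*r))) := by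
    rw [Real.sinh_eq, mul_sub, ← Real.exp_add]
    ring_nf
  have h4 : 0 < 1 - Real.exp (-(2*r)) := by
    have : Real.exp (-(2*r)) < 1 := Real.exp_lt_one_iff.2 (by linarith)
    linarith
  rw [h3, Real.log_mul (Real.exp_pos _).ne' h4.ne', Real.log_exp]
  ring

lemma coth_tendsto : Tendsto (fun r : ℝ => Real.cosh r / Real.sinh r) atTop (𝓝 1) := by
  have h0 : Tendsto (fun r : ℝ => Real.exp (-(2*r))) atTop (𝓝 0) :=
      Real.tendsto_exp_neg_atTop_nhds_zero.comp (tendsto_id.const_mul_atTop (by norm_num : (0:ℝ) < 2))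
  have h1 : Tendsto (fun r : ℝ => (1 + Real.exp (-(2 * r))) / (1 - Real.exp (-(2 * r)))) atTop (𝓝 1) := by
    have := (h0.const_add 1).div (h0.const_sub 1) (by norm_num)
    simp only [add_zero, sub_zero, div_one] at this
    exact this
  refine h1.congr' ?_
  filter_upwards [eventually_gt_atTop 0] with r hr
  have h4 : 0 < 1 - Real.exp (-(2*r)) := by
    have : Real.exp (-(2*r)) < 1 := Real.exp_lt_one_iff.2 (by linarith)
    linarith
  have hs := Real.sinh_pos_iff.2 hr
  rw [div_eq_div_iff h4.ne' hs.ne', Real.sinh_eq, Real.cosh_eq]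
  have e : Real.exp (-r) = Real.exp r * Real.exp (-(2*r)) := by
    rw [← Real.exp_add]; ring_nf
  rw [e]; ring

lemma lap_eq {t : ℝ} (ht : 0 < t) {r : ℝ} (hr : 0 < r) :
    (Real.cosh r : ℂ) * lapM (besselJ ((t:ℂ) * Complex.I)) 0 (Real.sinh r) =
      Complex.exp (-((t:ℂ) * Complex.I * r)) := by
  set ν := (t:ℂ) * Complex.I with hν
  have hνsq : ν ^ 2 = -(t:ℂ)^2 := by rw [hν, mul_pow, Complex.I_sq]; ring
  have hν0 : ν ≠ 0 := by simp [hν, ht.ne']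
  set J := besselJ ν with hJ
  have hd : ∀ (k : ℕ) (r : ℝ), 0 < r → HasDerivAt (fun r => lapM J k (Real.sinh r))
      (-(Real.cosh r : ℂ) * lapM J (k+1) (Real.sinh r)) r := by
    intro k r hr
    have h1 := lapM_hasDerivAt (besselJ_contOn (re_tI t)) (fun x hx => besselJ_le ht hx) k
      (Real.sinh_pos_iff.2 hr)
    have := h1.scomp r (Real.hasDerivAt_sinh r)
    refine this.congr_deriv ?_
    rw [Complex.real_smul]; ring
  have hch : ∀ r : ℝ, HasDerivAt (fun r : ℝ => (Real.cosh r : ℂ)) (Real.sinh r : ℂ) r :=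
    fun r => (Real.hasDerivAt_cosh r).ofReal_comp
  have hsh : ∀ r : ℝ, HasDerivAt (fun r : ℝ => (Real.sinh r : ℂ)) (Real.cosh r : ℂ) r :=
    fun r => (Real.hasDerivAt_sinh r).ofReal_comp
  set y : ℝ → ℂ := fun r => (Real.cosh r : ℂ) * lapM J 0 (Real.sinh r) with hy
  set y1 : ℝ → ℂ := fun r => (Real.sinh r : ℂ) * lapM J 0 (Real.sinh r) -
    (Real.cosh r : ℂ) ^ 2 * lapM J 1 (Real.sinh r) with hy1
  have hyd : ∀ r, 0 < r → HasDerivAt y (y1 r) r := by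
    intro r hr
    refine ((hch r).mul (hd 0 r hr)).congr_deriv ?_
    simp only [hy1]; ring
  have hy1d : ∀ r, 0 < r → HasDerivAt y1 (ν^2 * y r) r := by
    intro r hr
    refine HasDerivAt.congr_deriv (((hsh r).mul (hd 0 r hr)).sub (((hch r).pow 2).mul (hd 1 r hr))) ?_
    have ode := lap_ode ht (Real.sinh_pos_iff.2 hr)
    rw [← hν, ← hJ] at ode
    simp only [hy, hνsq]
    have hcs : (Real.cosh r : ℂ)^2 = (Real.sinh r : ℂ)^2 + 1 := by
      exact_mod_cast Real.cosh_sq r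
    rw [← hcs] at ode
    simp only [zero_add, Pi.pow_apply]
    push_cast
    push_cast at ode
    linear_combination (Complex.cosh r) * ode
  have hexp : ∀ (c : ℂ) (r : ℝ), HasDerivAt (fun r : ℝ => Complex.exp (c * r)) (Complex.exp (c * r) * c) r := by
    intro c r
    have h2 : HasDerivAt (fun x : ℝ => (x : ℂ)) 1 r := Complex.ofRealCLM.hasDerivAt
    simpa using (h2.const_mul c).cexp
  obtain ⟨A, hA⟩ : ∃ A, ∀ r ∈ Set.Ioi (0:ℝ), (y1 r + ν * y r) * Complex.exp (-ν * r) = A := by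
    have hD : ∀ r ∈ Set.Ioi (0:ℝ), HasDerivAt (fun r : ℝ => (y1 r + ν * y r) * Complex.exp (-ν * r)) 0 r := by
      intro r hr
      refine (((hy1d r hr).add ((hyd r hr).const_mul ν)).mul (hexp (-ν) r)).congr_deriv ?_
      simp only [Pi.add_apply]; ring
    exact isOpen_Ioi.exists_is_const_of_deriv_eq_zero isPreconnected_Ioi
      (fun r hr => (hD r hr).differentiableAt.differentiableWithinAt) (fun r hr => (hD r hr).deriv)
  obtain ⟨B, hB⟩ : ∃ B, ∀ r ∈ Set.Ioi (0:ℝ), (y1 r - ν * y r) * Complex.exp (ν * r) = B := by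
    have hD : ∀ r ∈ Set.Ioi (0:ℝ), HasDerivAt (fun r : ℝ => (y1 r - ν * y r) * Complex.exp (ν * r)) 0 r := by
      intro r hr
      refine (((hy1d r hr).sub ((hyd r hr).const_mul ν)).mul (hexp (ν) r)).congr_deriv ?_
      simp only [Pi.sub_apply]; ring
    exact isOpen_Ioi.exists_is_const_of_deriv_eq_zero isPreconnected_Ioi
      (fun r hr => (hD r hr).differentiableAt.differentiableWithinAt) (fun r hr => (hD r hr).deriv)
  have hF : ∀ r : ℝ, 0 < r → y r * Complex.exp (ν * r) = (A * Complex.exp (2 * ν * r) - B) / (2 * ν) := by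
    intro r hr
    rw [← hA r hr, ← hB r hr, eq_div_iff (by simp [hν0])]
    have e1 : Complex.exp (-ν * r) * Complex.exp (2 * ν * r) = Complex.exp (ν * r) := by
      rw [← Complex.exp_add]; ring_nf
    rw [mul_assoc (_ + _), e1]; ring
  have hlim : Tendsto (fun r : ℝ => y r * Complex.exp (ν * r)) atTop (𝓝 1) := by
    have hst : Tendsto Real.sinh atTop atTop := by
      apply tendsto_atTop_mono' _ _ tendsto_id
      filter_upwards [eventually_ge_atTop 0] with r hr using Real.self_le_sinh_iff.2 hr
    have l1 := (lap_asymp ht).comp hst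
    have l2 : Tendsto (fun r : ℝ => ((Real.cosh r / Real.sinh r : ℝ) : ℂ)) atTop (𝓝 1) :=
      (Complex.continuous_ofReal.tendsto 1).comp coth_tendsto
    have l3 : Tendsto (fun r : ℝ => Complex.exp (ν * ((r - Real.log (2 * Real.sinh r) : ℝ) : ℂ))) atTop (𝓝 1) := by
      have : Continuous (fun z : ℝ => Complex.exp (ν * (z:ℂ))) := by fun_prop
      have := (this.tendsto 0).comp sinh_log_tendsto
      rw [Complex.ofReal_zero, mul_zero, Complex.exp_zero] at this
      exact this
    have l4 := (l2.mul l1).mul l3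
    rw [mul_one, mul_one] at l4
    refine l4.congr' ?_
    filter_upwards [eventually_gt_atTop 0] with r hr
    have hs : (Real.sinh r : ℂ) ≠ 0 := by exact_mod_cast (Real.sinh_pos_iff.2 hr).ne'
    simp only [Function.comp, hy]
    have e1 : Complex.exp (ν * r) = Complex.exp (ν * (Real.log (2 * Real.sinh r) : ℂ)) *
        Complex.exp (ν * ((r - Real.log (2 * Real.sinh r) : ℝ) : ℂ)) := by
      rw [← Complex.exp_add]; congr 1; push_cast; ring
    rw [e1, Complex.ofReal_div]
    rw [hJ, ← hν]
    field_simp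
  have hA0 : A = 0 := by
    have hs : Tendsto (fun r : ℝ => r + Real.pi / (2 * t)) atTop atTop :=
      tendsto_atTop_add_const_right _ _ tendsto_id
    have l := (hlim.sub (hlim.comp hs)).norm
    rw [sub_self, norm_zero] at l
    have l2 : Tendsto (fun _ : ℝ => ‖A / ν‖) atTop (𝓝 0) := by
      refine l.congr' ?_
      filter_upwards [eventually_gt_atTop 0] with r hr
      simp only [Function.comp]
      rw [hF r hr, hF _ (by positivity)]
      have e1 : Complex.exp (2 * ν * ((r + Real.pi / (2 * t) : ℝ) : ℂ)) = - Complex.exp (2 * ν * r) := by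
        have htc : (t:ℂ) ≠ 0 := by exact_mod_cast ht.ne'
        have : 2 * ν * ((r + Real.pi / (2 * t) : ℝ) : ℂ) = 2 * ν * r + Real.pi * Complex.I := by
          rw [hν]; push_cast; field_simp
        rw [this, Complex.exp_add, Complex.exp_pi_mul_I]; ring
      rw [e1]
      have e2 : (A * Complex.exp (2 * ν * r) - B) / (2 * ν) - (A * -Complex.exp (2 * ν * r) - B) / (2 * ν)
          = A / ν * Complex.exp (2 * ν * r) := by
        field_simp; ring
      rw [e2, norm_mul]
      have : 2 * ν * r = ((2 * t * r : ℝ) : ℂ) * Complex.I := by rw [hν]; push_cast; ring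
      rw [this, Complex.norm_exp_ofReal_mul_I, mul_one]
    have := tendsto_nhds_unique l2 tendsto_const_nhds
    rw [eq_comm, norm_eq_zero, div_eq_zero_iff] at this
    exact this.resolve_right hν0
  have hB1 : (A * 0 - B) / (2 * ν) = 1 := by
    have l2 : Tendsto (fun _ : ℝ => (A * 0 - B) / (2 * ν)) atTop (𝓝 1) := by
      refine hlim.congr' ?_
      filter_upwards [eventually_gt_atTop 0] with r hr
      rw [hF r hr, hA0]; simp
    exact tendsto_nhds_unique tendsto_const_nhds l2
  have h1 := hF r hr
  rw [hA0, zero_mul, ← zero_mul (0:ℂ)] at h1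
  rw [hA0] at hB1
  rw [hB1] at h1
  rw [Complex.exp_neg]
  exact eq_inv_of_mul_eq_one_left h1

lemma chooseG {s : ℂ} (h : 0 ≤ s.re) (j : ℕ) :
    (Nat.factorial j : ℂ) * Ring.choose (s + j) j * Complex.Gamma (s + 1) =
      Complex.Gamma (s + j + 1) := by
  have h1 := Ring.factorial_nsmul_multichoose_eq_ascPochhammer (s + 1) j
  rw [Polynomial.ascPochhammer_smeval_eq_eval] at h1
  have h2 := Complex.Gamma_add_nat_div_Gamma_eq (n := j) (s + 1) (by
    intro k h0
    have := congrArg Complex.re h0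
    simp at this
    have h2 : (0:ℝ) ≤ k := by positivity
    linarith)
  have h3 : Ring.choose (s + j) j = Ring.multichoose (s + 1) j := by
    unfold Ring.choose
    congr 1
    ring
  rw [h3]
  rw [nsmul_eq_mul] at h1
  rw [h1, ← h2]
  have h4 : Complex.Gamma (s + 1) ≠ 0 := by simpa using gamma_ne h 0
  rw [div_mul_cancel₀ _ h4]
  ring_nf

lemma bc_conv {ν : ℂ} (h : 0 ≤ ν.re) (m : ℕ) :
    ∑ p ∈ Finset.HasAntidiagonal.antidiagonal m, bc ν p.1 * bc ν p.2 =
      bc (2 * ν) m * (Complex.Gamma (2 * ν + 2 * m + 1) / Complex.Gamma (ν + m + 1) ^ 2) := by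
  have hc := Ring.add_choose_eq m (Commute.all (ν + m) (ν + m))
  have hG := gamma_ne h m
  have h2 : 0 ≤ (2 * ν).re := by simpa using h
  have h2m : 0 ≤ (2 * ν + m).re := by
    simp only [Complex.add_re, Complex.natCast_re]
    positivity
  have e : ∀ p ∈ Finset.HasAntidiagonal.antidiagonal m, bc ν p.1 * bc ν p.2 =
      (-1) ^ m / Complex.Gamma (ν + m + 1) ^ 2 *
        (Ring.choose (ν + m) p.1 * Ring.choose (ν + m) p.2) := by
    rintro ⟨j, k⟩ hp
    rw [Finset.HasAntidiagonal.mem_antidiagonal] at hp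
    simp only at hp ⊢
    subst hp
    have a1 : 0 ≤ (ν + k).re := by simp only [Complex.add_re, Complex.natCast_re]; positivity
    have a2 : 0 ≤ (ν + j).re := by simp only [Complex.add_re, Complex.natCast_re]; positivity
    have c1 := chooseG a1 j
    have c2 := chooseG a2 k
    have g1 := gamma_ne h k
    have g2 := gamma_ne h j
    have f1 : ((Nat.factorial j : ℕ) : ℂ) ≠ 0 := by exact_mod_cast Nat.factorial_ne_zero j
    have f2 : ((Nat.factorial k : ℕ) : ℂ) ≠ 0 := by exact_mod_cast Nat.factorial_ne_zero k
    have e1 : ν + ((j + k : ℕ) : ℂ) = ν + k + j := by push_cast; ring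
    have e2 : ν + ((j + k : ℕ) : ℂ) = ν + j + k := by push_cast; ring
    rw [← e1] at c1
    rw [← e2] at c2
    have d1 : Ring.choose (ν + ((j + k : ℕ) : ℂ)) j =
      Complex.Gamma (ν + ((j + k : ℕ) : ℂ) + 1) / (Nat.factorial j * Complex.Gamma (ν + k + 1)) := by
      rw [← c1]; field_simp
    have d2 : Ring.choose (ν + ((j + k : ℕ) : ℂ)) k =
      Complex.Gamma (ν + ((j + k : ℕ) : ℂ) + 1) / (Nat.factorial k * Complex.Gamma (ν + j + 1)) := by
      rw [← c2]; field_simp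
    rw [d1, d2]
    unfold bc
    generalize Complex.Gamma (ν + ((j + k : ℕ) : ℂ) + 1) = G at *
    generalize Complex.Gamma (ν + k + 1) = G1 at *
    generalize Complex.Gamma (ν + j + 1) = G2 at *
    field_simp
    ring
  rw [Finset.sum_congr rfl e, ← Finset.mul_sum, ← hc]
  have c3 := chooseG h2m m
  have e3 : 2 * ν + m + m = ν + m + (ν + m) := by ring
  rw [e3] at c3
  have e4 : 2 * ν + 2 * m + 1 = ν + m + (ν + m) + 1 := by ring
  rw [e4, ← c3]
  have g3 := gamma_ne h2 m
  have f3 : ((Nat.factorial m : ℕ) : ℂ) ≠ 0 := by exact_mod_cast Nat.factorial_ne_zero m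
  unfold bc
  generalize Complex.Gamma (2 * ν + m + 1) = G at *
  generalize Ring.choose (ν + m + (ν + m)) m = R at *
  field_simp

lemma bg_summable_norm {ν : ℂ} (h : 0 ≤ ν.re) (z : ℝ) : Summable fun k => ‖bc ν k * (z : ℂ) ^ k‖ :=
  (bg_summable h z).norm

lemma bg_sq {ν : ℂ} (h : 0 ≤ ν.re) (z : ℝ) :
    bg ν z ^ 2 = ∑' m : ℕ, bc (2 * ν) m *
      (Complex.Gamma (2 * ν + 2 * m + 1) / Complex.Gamma (ν + m + 1) ^ 2) * (z : ℂ) ^ m := by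
  rw [sq]
  unfold bg
  rw [tsum_mul_tsum_eq_tsum_sum_antidiagonal_of_summable_norm (bg_summable_norm h z)
    (bg_summable_norm h z)]
  congr 1
  ext m
  rw [← bc_conv h, Finset.sum_mul]
  apply Finset.sum_congr rfl
  rintro ⟨j, k⟩ hp
  rw [Finset.HasAntidiagonal.mem_antidiagonal] at hp
  simp only at hp ⊢
  subst hp
  ring

noncomputable def rho (w : ℝ) : ℝ := (√w)⁻¹ * (√(1 - w))⁻¹

lemma rho_nonneg (w : ℝ) : 0 ≤ rho w := by unfold rho; positivity

lemma beta_integrand {ν : ℂ} (k : ℕ) {w : ℝ} (hw : w ∈ Set.Ioo (0:ℝ) 1) :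
    (w : ℂ) ^ (ν + k + 1 / 2 - 1) * (1 - (w : ℂ)) ^ ((1 / 2 : ℂ) - 1) =
      (rho w : ℂ) * (Complex.exp (ν * (Real.log w : ℂ)) * (w : ℂ) ^ k) := by
  have h0 : (w : ℂ) ≠ 0 := by exact_mod_cast hw.1.ne'
  have e1 : (w : ℂ) ^ (ν + k + 1 / 2 - 1) =
      Complex.exp (ν * (Real.log w : ℂ)) * (w : ℂ) ^ k * ((√w)⁻¹ : ℝ) := by
    rw [show ν + k + 1 / 2 - 1 = ν + k + ((-(1/2) : ℝ) : ℂ) by push_cast; ring]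
    rw [Complex.cpow_add _ _ h0, Complex.cpow_add _ _ h0, Complex.cpow_natCast,
      ← Complex.ofReal_cpow hw.1.le, Real.rpow_neg hw.1.le, ← Real.sqrt_eq_rpow,
      Complex.cpow_def_of_ne_zero h0, Complex.ofReal_log hw.1.le, mul_comm ν]
  have e2 : (1 - (w : ℂ)) ^ ((1 / 2 : ℂ) - 1) = ((√(1 - w))⁻¹ : ℝ) := by
    have h1 : (0:ℝ) ≤ 1 - w := by linarith [hw.2]
    rw [show ((1 / 2 : ℂ) - 1) = ((-(1/2) : ℝ) : ℂ) by push_cast; ring,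
      show (1 - (w:ℂ)) = ((1 - w : ℝ) : ℂ) by push_cast; ring, ← Complex.ofReal_cpow h1,
      Real.rpow_neg h1, ← Real.sqrt_eq_rpow]
  rw [e1, e2]
  unfold rho
  push_cast
  ring

lemma beta_int {ν : ℂ} (h : 0 ≤ ν.re) (k : ℕ) :
    IntegrableOn (fun w : ℝ => (rho w : ℂ) * (Complex.exp (ν * (Real.log w : ℂ)) * (w : ℂ) ^ k))
      (Set.Ioo 0 1) ∧
    ∫ w in Set.Ioo (0:ℝ) 1, (rho w : ℂ) * (Complex.exp (ν * (Real.log w : ℂ)) * (w : ℂ) ^ k) =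
      Complex.Gamma (ν + k + 1 / 2) * (√Real.pi : ℂ) / Complex.Gamma (ν + k + 1) := by
  have hu : 0 < (ν + k + 1 / 2).re := by
    simp only [Complex.add_re, Complex.natCast_re]
    norm_num
    positivity
  have hv : 0 < (1 / 2 : ℂ).re := by norm_num
  have hc := Complex.betaIntegral_convergent hu hv
  have hb := Complex.Gamma_mul_Gamma_eq_betaIntegral hu hv
  constructor
  · rw [intervalIntegrable_iff_integrableOn_Ioo_of_le zero_le_one] at hc
    exact hc.congr_fun (fun w hw => beta_integrand k hw) measurableSet_Ioo
  · rw [← setIntegral_congr_fun measurableSet_Ioo (fun w hw => beta_integrand (ν := ν) k hw)]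
    unfold Complex.betaIntegral at hb
    rw [intervalIntegral.integral_of_le zero_le_one, integral_Ioc_eq_integral_Ioo] at hb
    have e : (ν + k + 1 / 2 + 1 / 2 : ℂ) = ν + k + 1 := by ring
    have e2 : Complex.Gamma (1 / 2) = (√Real.pi : ℂ) := by
      rw [Complex.Gamma_one_half_eq, Real.sqrt_eq_rpow, Complex.ofReal_cpow Real.pi_pos.le]
      norm_num
    rw [e, e2] at hb
    rw [hb, mul_div_cancel_left₀ _ (gamma_ne h k)]

lemma rho_integrable : IntegrableOn rho (Set.Ioo 0 1) := by
  have := (beta_int (ν := 0) (by simp) 0).1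
  simp only [zero_mul, Complex.exp_zero, pow_zero, mul_one] at this
  have := this.re
  simp only [RCLike.re_to_complex, Complex.ofReal_re] at this
  exact this

lemma prod_formula {τ x : ℝ} (hx : 0 < x) :
    besselJ ((τ : ℂ) * Complex.I) x ^ 2 = (1 / Real.pi : ℂ) *
      ∫ w in Set.Ioo (0:ℝ) 1, (rho w : ℂ) * besselJ (((2 * τ : ℝ) : ℂ) * Complex.I) (2 * x * √w) := by
  set ν : ℂ := (τ : ℂ) * Complex.I with hν
  have h : 0 ≤ ν.re := by simp [hν]
  have h2 : 0 ≤ (2 * ν).re := by simpa using h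
  have e2 : ((2 * τ : ℝ) : ℂ) * Complex.I = 2 * ν := by rw [hν]; push_cast; ring
  rw [e2]
  have hJ : ∀ w ∈ Set.Ioo (0:ℝ) 1, (rho w : ℂ) * besselJ (2 * ν) (2 * x * √w) =
      ∑' k : ℕ, Complex.exp (2 * ν * (Real.log x : ℂ)) * (bc (2 * ν) k * ((x ^ 2 : ℝ) : ℂ) ^ k) *
        ((rho w : ℂ) * (Complex.exp (ν * (Real.log w : ℂ)) * (w : ℂ) ^ k)) := by
    intro w hw
    have hs : 0 < √w := Real.sqrt_pos.2 hw.1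
    rw [besselJ_eq _ (by positivity), show 2 * x * √w / 2 = x * √w by ring,
      Real.log_mul hx.ne' hs.ne', Real.log_sqrt hw.1.le]
    have e3 : (2 * x * √w) ^ 2 / 4 = x ^ 2 * w := by
      rw [mul_pow, Real.sq_sqrt hw.1.le]; ring
    rw [e3]
    unfold bg
    rw [← tsum_mul_left, ← tsum_mul_left]
    congr 1
    ext k
    have e4 : 2 * ν * ((Real.log x + Real.log w / 2 : ℝ) : ℂ) =
      2 * ν * (Real.log x : ℂ) + ν * (Real.log w : ℂ) := by push_cast; ring
    rw [e4, Complex.exp_add]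
    push_cast
    rw [mul_pow]
    ring
  rw [setIntegral_congr_fun measurableSet_Ioo hJ]
  have hs := hasSum_integral_of_summable_integral_norm (μ := volume.restrict (Set.Ioo (0:ℝ) 1))
    (F := fun k w => Complex.exp (2 * ν * (Real.log x : ℂ)) * (bc (2 * ν) k * ((x ^ 2 : ℝ) : ℂ) ^ k) *
        ((rho w : ℂ) * (Complex.exp (ν * (Real.log w : ℂ)) * (w : ℂ) ^ k)))
    (fun k => ((beta_int h k).1).const_mul _) (by
      have hsum := ((bg_summable_norm h2 (x ^ 2)).mul_left
        ‖Complex.exp (2 * ν * (Real.log x : ℂ))‖).mul_right (∫ w in Set.Ioo (0:ℝ) 1, rho w)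
      refine Summable.of_nonneg_of_le (fun k => by positivity) (fun k => ?_) hsum
      rw [← integral_const_mul]
      refine setIntegral_mono_on ((beta_int h k).1.const_mul _).norm (rho_integrable.const_mul _)
        measurableSet_Ioo (fun w hw => ?_)
      rw [norm_mul, norm_mul, norm_mul (rho w : ℂ), norm_mul (Complex.exp _)]
      gcongr
      have n1 : ‖Complex.exp (ν * (Real.log w : ℂ))‖ = 1 := by
        rw [Complex.norm_exp]; simp [hν]
      have n2 : ‖(w : ℂ) ^ k‖ ≤ 1 := by
        rw [norm_pow, Complex.norm_real, Real.norm_of_nonneg hw.1.le]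
        exact pow_le_one₀ hw.1.le hw.2.le
      rw [n1, one_mul, Complex.norm_real, Real.norm_of_nonneg (rho_nonneg w)]
      exact mul_le_of_le_one_right (rho_nonneg w) n2)
  rw [← hs.tsum_eq, besselJ_eq _ hx, mul_pow, bg_sq h, ← tsum_mul_left, ← tsum_mul_left]
  congr 1
  ext k
  rw [integral_const_mul, (beta_int h k).2]
  have hd := Complex.Gamma_mul_Gamma_add_half (ν + k + 1 / 2)
  rw [show ν + k + 1 / 2 + 1 / 2 = ν + k + 1 by ring,
    show 2 * (ν + k + 1 / 2) = 2 * ν + 2 * k + 1 by ring] at hd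
  have hG := gamma_ne h k
  have h20 : (2:ℂ) ≠ 0 := two_ne_zero
  have hp : (2:ℂ) ^ (1 - (2 * ν + 2 * k + 1)) = Complex.exp (- (2 * ν * (Real.log 2 : ℂ))) * (4 ^ k)⁻¹ := by
    rw [show (1 - (2 * ν + 2 * k + 1)) = -(2 * ν) + -((2 * k : ℕ) : ℂ) by push_cast; ring,
      Complex.cpow_add _ _ h20, Complex.cpow_neg _ ((2 * k : ℕ) : ℂ), Complex.cpow_natCast, pow_mul,
      Complex.cpow_def_of_ne_zero h20, Complex.ofReal_log (by norm_num)]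
    push_cast
    norm_num
    ring_nf
  rw [hp] at hd
  have hpi : (√Real.pi : ℂ) * (√Real.pi : ℂ) = Real.pi := by
    rw [← Complex.ofReal_mul, Real.mul_self_sqrt Real.pi_pos.le]
  have hpi0 : (Real.pi : ℂ) ≠ 0 := by exact_mod_cast Real.pi_pos.ne'
  rw [Real.log_div hx.ne' two_ne_zero, ← Complex.exp_nat_mul]
  have e5 : ((2:ℕ):ℂ) * (ν * ((Real.log x - Real.log 2 : ℝ) : ℂ)) =
    2 * ν * (Real.log x : ℂ) + - (2 * ν * (Real.log 2 : ℂ)) := by push_cast; ring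
  rw [e5, Complex.exp_add]
  have e6 : Complex.Gamma (ν + k + 1 / 2) =
    Complex.Gamma (2 * ν + 2 * k + 1) * (Complex.exp (- (2 * ν * (Real.log 2 : ℂ))) * (4 ^ k)⁻¹) *
     (√Real.pi : ℂ) / Complex.Gamma (ν + k + 1) := by
    rw [← hd, mul_div_cancel_right₀ _ hG]
  rw [e6]
  generalize Complex.Gamma (ν + k + 1) = G at *
  generalize Complex.Gamma (2 * ν + 2 * k + 1) = G1 at *
  generalize Complex.exp (- (2 * ν * (Real.log 2 : ℂ))) = E1 at *
  generalize Complex.exp (2 * ν * (Real.log x : ℂ)) = E2 at *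
  have : ((x ^ 2 / 4 : ℝ) : ℂ) ^ k = ((x ^ 2 : ℝ) : ℂ) ^ k * (4 ^ k)⁻¹ := by
    push_cast
    rw [div_pow]
    rfl
  rw [this]
  have h4 : (4 : ℂ) ^ k ≠ 0 := pow_ne_zero _ (by norm_num)
  calc _ = (E2 * (bc (2 * ν) k * ((x ^ 2 : ℝ) : ℂ) ^ k)) * (G1 * (E1 * (4 ^ k)⁻¹) / G ^ 2) := by ring
    _ = 1 / Real.pi * Real.pi * (E2 * (bc (2 * ν) k * ((x ^ 2 : ℝ) : ℂ) ^ k)) * (G1 * (E1 * (4 ^ k)⁻¹) / G ^ 2) := by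
      rw [one_div_mul_cancel hpi0, one_mul]
    _ = _ := by rw [← hpi]; field_simp

lemma sinh_image : Real.sinh '' Set.Ioi 0 = Set.Ioi 0 := by
  ext y
  constructor
  · rintro ⟨x, hx, rfl⟩
    exact Real.sinh_pos_iff.2 hx
  · intro hy
    exact ⟨Real.arsinh y, Real.arsinh_pos_iff.2 hy, Real.sinh_arsinh y⟩

lemma subst_sinh (g : ℝ → ℝ) :
    ∫ t in Set.Ioi (0:ℝ), g (Real.sinh t) * Real.cosh t = ∫ s in Set.Ioi (0:ℝ), g s := by
  have := integral_image_eq_integral_abs_deriv_smul (s := Set.Ioi (0:ℝ)) (f := Real.sinh)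
    (f' := Real.cosh) measurableSet_Ioi (fun x _ => (Real.hasDerivAt_sinh x).hasDerivWithinAt)
    Real.sinh_injective.injOn g
  rw [sinh_image] at this
  rw [this]
  congr 1
  ext t
  rw [abs_of_pos (Real.cosh_pos t), smul_eq_mul, mul_comm]

lemma subst_sinh_int (g : ℝ → ℝ) :
    IntegrableOn (fun t => g (Real.sinh t) * Real.cosh t) (Set.Ioi 0) ↔ IntegrableOn g (Set.Ioi 0) := by
  have := integrableOn_image_iff_integrableOn_abs_deriv_smul (s := Set.Ioi (0:ℝ)) (f := Real.sinh)
    (f' := Real.cosh) measurableSet_Ioi (fun x _ => (Real.hasDerivAt_sinh x).hasDerivWithinAt)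
    Real.sinh_injective.injOn g
  rw [sinh_image] at this
  rw [this]
  apply integrableOn_congr_fun _ measurableSet_Ioi
  intro t _
  simp only
  rw [abs_of_pos (Real.cosh_pos t), smul_eq_mul, mul_comm]

noncomputable def qk (s : ℝ) : ℝ := s / √(1 + s ^ 2) ^ 3

lemma qk_cont : Continuous qk := by
  unfold qk
  apply Continuous.div (by fun_prop) (by fun_prop)
  intro x
  positivity

lemma qk_nonneg {s : ℝ} (hs : 0 ≤ s) : 0 ≤ qk s := by unfold qk; positivity

lemma qk_le {s : ℝ} (hs : 0 ≤ s) : qk s ≤ s := by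
  unfold qk
  apply div_le_self hs
  apply one_le_pow₀
  rw [Real.one_le_sqrt]
  nlinarith

lemma qk_div {s : ℝ} (hs : 0 < s) : qk s / s ≤ (1 + s ^ 2)⁻¹ := by
  have h : (1:ℝ) ≤ √(1 + s ^ 2) := by rw [Real.one_le_sqrt]; nlinarith
  unfold qk
  rw [div_div_cancel_left' hs.ne']
  apply inv_anti₀ (by positivity)
  calc 1 + s ^ 2 = √(1 + s ^ 2) ^ 2 := (Real.sq_sqrt (by positivity)).symm
    _ ≤ _ := pow_le_pow_right₀ h (by norm_num)

lemma qk_sinh (t : ℝ) : qk (Real.sinh t) = Real.sinh t / Real.cosh t ^ 3 := by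
  unfold qk
  rw [show 1 + Real.sinh t ^ 2 = Real.cosh t ^ 2 by rw [Real.cosh_sq]; ring,
    Real.sqrt_sq (Real.cosh_pos t).le]

noncomputable def Wk (x c : ℝ) : ℝ := x * struveK0 (2 * x * c) - 1 / (Real.pi * c)

lemma exp_sinh_int {y : ℝ} (hy : 0 < y) :
    IntegrableOn (fun t => Real.exp (-y * Real.sinh t)) (Set.Ioi 0) := by
  have h := pow_exp_integrable 0 hy
  refine Integrable.mono' h (by fun_prop) ?_
  filter_upwards [ae_restrict_mem measurableSet_Ioi] with t ht
  rw [Real.norm_of_nonneg (by positivity)]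
  have : t ≤ Real.sinh t := Real.self_le_sinh_iff.2 (le_of_lt ht)
  simp only [pow_zero, one_mul]
  apply Real.exp_le_exp.2
  nlinarith

lemma exp_q_int {y : ℝ} (hy : 0 < y) :
    IntegrableOn (fun s => Real.exp (-y * s) * qk s) (Set.Ioi 0) := by
  have h := pow_exp_integrable 1 hy
  refine Integrable.mono' h (by have := qk_cont; fun_prop) ?_
  filter_upwards [ae_restrict_mem measurableSet_Ioi] with t ht
  have ht' : 0 ≤ t := le_of_lt ht
  rw [Real.norm_of_nonneg (mul_nonneg (by positivity) (qk_nonneg ht'))]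
  have := qk_le ht'
  rw [pow_one, mul_comm]
  gcongr

lemma struve_ibp {y : ℝ} (hy : 0 < y) :
    y * (∫ t in Set.Ioi (0:ℝ), Real.exp (-y * Real.sinh t)) - 1 =
      - ∫ s in Set.Ioi (0:ℝ), Real.exp (-y * s) * qk s := by
  have hi2 := exp_q_int hy
  rw [← subst_sinh_int] at hi2
  rw [← subst_sinh (fun s => Real.exp (-y * s) * qk s)]
  have hi1 := exp_sinh_int hy
  have hd : ∀ t ∈ Set.Ici (0:ℝ), HasDerivAt (fun t => Real.exp (-y * Real.sinh t) / Real.cosh t)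
      (-(y * Real.exp (-y * Real.sinh t)) -
        Real.exp (-y * Real.sinh t) * qk (Real.sinh t) * Real.cosh t) t := by
    intro t _
    have hc := (Real.cosh_pos t).ne'
    have h1 := (((Real.hasDerivAt_sinh t).const_mul (-y)).exp).div (Real.hasDerivAt_cosh t) hc
    refine h1.congr_deriv ?_
    rw [qk_sinh]
    field_simp
  have hlim : Tendsto (fun t => Real.exp (-y * Real.sinh t) / Real.cosh t) atTop (𝓝 0) := by
    have h1 : Tendsto (fun t : ℝ => Real.exp (-t)) atTop (𝓝 0) := Real.tendsto_exp_neg_atTop_nhds_zero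
    have h2 : Tendsto (fun t : ℝ => Real.exp (-(y * t))) atTop (𝓝 0) :=
      h1.comp (tendsto_id.const_mul_atTop hy)
    refine squeeze_zero' (Eventually.of_forall fun t => ?_) ?_ h2
    · have := Real.cosh_pos t; positivity
    · filter_upwards [eventually_ge_atTop 0] with t ht
      have : t ≤ Real.sinh t := Real.self_le_sinh_iff.2 ht
      calc _ ≤ Real.exp (-y * Real.sinh t) := div_le_self (by positivity) (Real.one_le_cosh t)
        _ ≤ _ := by apply Real.exp_le_exp.2; nlinarith
  have := integral_Ioi_of_hasDerivAt_of_tendsto' hd ((hi1.const_mul y).neg.sub hi2) hlim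
  have hi3 : Integrable (fun t => -(y * Real.exp (-y * Real.sinh t))) (volume.restrict (Set.Ioi 0)) :=
    (hi1.const_mul y).neg
  rw [integral_sub hi3 hi2, integral_neg, integral_const_mul] at this
  simp only [Real.sinh_zero, mul_zero, Real.exp_zero, Real.cosh_zero] at this
  linarith

lemma Wk_eq {x c : ℝ} (hx : 0 < x) (hc : 0 < c) :
    Wk x c = -(1 / (Real.pi * c)) * ∫ s in Set.Ioi (0:ℝ), Real.exp (-(2 * x * c) * s) * qk s := by
  have h := struve_ibp (y := 2 * x * c) (by positivity)
  unfold Wk struveK0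
  have hp := Real.pi_pos
  rw [neg_mul_comm, ← h]
  field_simp

lemma int_s_exp {y : ℝ} (hy : 0 < y) : ∫ s in Set.Ioi (0:ℝ), s ^ 1 * Real.exp (-y * s) = 1 / y ^ 2 := by
  have := Real.integral_rpow_mul_exp_neg_mul_Ioi (a := 2) (r := y) (by norm_num) hy
  norm_num at this
  simp only [pow_one, neg_mul]
  rw [this]
  simp

lemma Wk_le {x c : ℝ} (hx : 0 < x) (hc : 1 ≤ c) : |Wk x c| ≤ 2 * (1 + x ^ 2)⁻¹ := by
  have hc0 : 0 < c := by linarith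
  have hp := Real.pi_gt_three
  set y := 2 * x * c with hy
  have hy0 : 0 < y := by positivity
  have h := struve_ibp hy0
  have h1 : 0 ≤ ∫ t in Set.Ioi (0:ℝ), Real.exp (-y * Real.sinh t) :=
    setIntegral_nonneg measurableSet_Ioi (fun _ _ => by positivity)
  rw [Wk_eq hx hc0]
  rw [← hy]
  set I := ∫ s in Set.Ioi (0:ℝ), Real.exp (-y * s) * qk s with hI
  have hI0 : 0 ≤ I := setIntegral_nonneg measurableSet_Ioi
    (fun s hs => mul_nonneg (by positivity) (qk_nonneg (le_of_lt hs)))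
  have hI1 : I ≤ 1 := by nlinarith
  have hI2 : I ≤ 1 / y ^ 2 := by
    rw [← int_s_exp hy0]
    refine setIntegral_mono_on (exp_q_int hy0) (pow_exp_integrable 1 hy0) measurableSet_Ioi ?_
    intro s hs
    rw [pow_one, mul_comm]
    have := qk_le (le_of_lt hs)
    gcongr
  have hI3 : I * x ^ 2 ≤ 1 := by
    rw [le_div_iff₀ (by positivity)] at hI2
    have : x ^ 2 ≤ y ^ 2 := by
      apply pow_le_pow_left₀ hx.le
      rw [hy]; nlinarith
    nlinarith
  rw [abs_mul, abs_neg, abs_of_nonneg hI0, abs_of_pos (by positivity)]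
  have h5 : 1 / (Real.pi * c) ≤ 1 := by
    rw [div_le_one (by positivity)]; nlinarith
  rw [← div_eq_mul_inv, le_div_iff₀ (by positivity)]
  have : 1 / (Real.pi * c) * I ≤ I := by nlinarith
  nlinarith [sq_nonneg x]

lemma Wk_meas : Measurable (fun p : ℝ × ℝ => Wk p.1 p.2) := by
  unfold Wk struveK0
  have h : StronglyMeasurable (fun p : ℝ × ℝ =>
      ∫ t in Set.Ioi (0:ℝ), Real.exp (-(2 * p.1 * p.2) * Real.sinh t)) := by
    apply StronglyMeasurable.integral_prod_right
      (f := fun p : ℝ × ℝ => fun t : ℝ => Real.exp (-(2 * p.1 * p.2) * Real.sinh t))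
    apply Continuous.stronglyMeasurable
    unfold Function.uncurry
    fun_prop
  have h' := h.measurable
  fun_prop

noncomputable def jim (t y : ℝ) : ℝ := (besselJ ((t : ℂ) * Complex.I) y).im

lemma jim_contOn (t : ℝ) : ContinuousOn (jim t) (Set.Ioi 0) := by
  unfold jim
  exact Complex.continuous_im.comp_continuousOn (besselJ_contOn (re_tI t))

lemma jim_le {t y : ℝ} (ht : 0 < t) (hy : 0 < y) : |jim t y| ≤ √(bK t) :=
  (Complex.abs_im_le_norm _).trans (besselJ_le ht hy)

lemma jim_lap {t r : ℝ} (ht : 0 < t) (hr : 0 < r) :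
    (∫ y in Set.Ioi (0:ℝ), Real.exp (-Real.sinh r * y) * jim t y) * Real.cosh r = - Real.sin (t * r) := by
  have h := lap_eq ht hr
  have hp : 0 < Real.sinh r := Real.sinh_pos_iff.2 hr
  have hi := lapM_integrable (besselJ_contOn (re_tI t)) (fun x hx => besselJ_le ht hx) 0 hp
  have h2 : (lapM (besselJ ((t : ℂ) * Complex.I)) 0 (Real.sinh r)).im =
      ∫ y in Set.Ioi (0:ℝ), Real.exp (-Real.sinh r * y) * jim t y := by
    unfold lapM
    have := integral_im hi
    simp only [RCLike.im_to_complex] at this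
    rw [← this]
    congr 1
    ext y
    rw [Complex.im_ofReal_mul]
    simp [jim]
  rw [← h2]
  have h3 := congrArg Complex.im h
  rw [Complex.im_ofReal_mul] at h3
  rw [mul_comm, h3, show -((t:ℂ) * Complex.I * r) = ((-(t * r) : ℝ) : ℂ) * Complex.I by push_cast; ring,
    Complex.exp_ofReal_mul_I_im, Real.sin_neg]

lemma exq_prod_int {c : ℝ} (hc : 0 < c) :
    Integrable (fun p : ℝ × ℝ => Real.exp (-(2 * p.1 * c) * p.2) * qk p.2)
      ((volume.restrict (Set.Ioi 0)).prod (volume.restrict (Set.Ioi 0))) := by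
  have hq := qk_cont
  have hm : AEStronglyMeasurable (fun p : ℝ × ℝ => Real.exp (-(2 * p.1 * c) * p.2) * qk p.2)
      ((volume.restrict (Set.Ioi 0)).prod (volume.restrict (Set.Ioi 0))) := by
    apply Continuous.aestronglyMeasurable
    fun_prop
  have key : ∀ s : ℝ, 0 < s →
      IntegrableOn (fun x : ℝ => Real.exp (-(2 * x * c) * s) * qk s) (Set.Ioi 0) ∧
      ∫ x in Set.Ioi (0:ℝ), ‖Real.exp (-(2 * x * c) * s) * qk s‖ = 1 / (2 * c) * (qk s / s) := by
    intro s hs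
    have hp : 0 < 2 * c * s := by positivity
    have e : ∀ x : ℝ, Real.exp (-(2 * x * c) * s) = Real.exp (-(2 * c * s) * x) := by
      intro x; congr 1; ring
    simp_rw [e, norm_mul, Real.norm_of_nonneg (Real.exp_pos _).le, Real.norm_of_nonneg (qk_nonneg hs.le)]
    constructor
    · have := pow_exp_integrable 0 hp
      simp only [pow_zero, one_mul] at this
      exact this.mul_const _
    · rw [integral_mul_const, integral_exp_mul_Ioi (by linarith)]
      simp
      field_simp
  rw [integrable_prod_iff' hm]
  constructor
  · filter_upwards [ae_restrict_mem measurableSet_Ioi] with s hs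
    exact (key s hs).1
  · have hi : IntegrableOn (fun s : ℝ => 1 / (2 * c) * (1 + s ^ 2)⁻¹) (Set.Ioi 0) :=
      (integrable_inv_one_add_sq.const_mul _).integrableOn
    refine Integrable.mono' hi hm.norm.prod_swap.integral_prod_right' ?_
    filter_upwards [ae_restrict_mem measurableSet_Ioi] with s hs
    rw [Real.norm_of_nonneg (integral_nonneg fun _ => norm_nonneg _)]
    rw [(key s hs).2]
    have := qk_div hs
    gcongr

lemma inner_formula {t b c : ℝ} (ht : 0 < t) (hb : 0 < b) (hc : 0 < c) :
    ∫ x in Set.Ioi (0:ℝ), Wk x c * jim t (2 * x * b) =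
      b / (2 * Real.pi) * ∫ r in Set.Ioi (0:ℝ), Real.sin (t * r) *
        (Real.sinh r / √(c ^ 2 + b ^ 2 * Real.sinh r ^ 2) ^ 3) := by
  have hp := Real.pi_pos
  have hφ : ContinuousOn (fun x => jim t (2 * x * b)) (Set.Ioi 0) := by
    refine (jim_contOn t).comp (by fun_prop) ?_
    intro x hx
    have : (0:ℝ) < x := hx
    simp only [Set.mem_Ioi]
    positivity
  have hint : Integrable (Function.uncurry fun x s : ℝ =>
      Real.exp (-(2 * x * c) * s) * qk s * jim t (2 * x * b))
      ((volume.restrict (Set.Ioi 0)).prod (volume.restrict (Set.Ioi 0))) := by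
    have hm : AEStronglyMeasurable (fun x => jim t (2 * x * b)) (volume.restrict (Set.Ioi 0)) :=
      hφ.aestronglyMeasurable measurableSet_Ioi
    refine (exq_prod_int hc).mul_bdd (c := √(bK t)) (hm.comp_fst) ?_
    rw [Measure.prod_restrict]
    filter_upwards [ae_restrict_mem (measurableSet_Ioi.prod measurableSet_Ioi)] with p hp
    have : (0:ℝ) < p.1 := hp.1
    exact jim_le ht (by positivity)
  have h1 : ∫ x in Set.Ioi (0:ℝ), Wk x c * jim t (2 * x * b) =
      -(1 / (Real.pi * c)) * ∫ x in Set.Ioi (0:ℝ), ∫ s in Set.Ioi (0:ℝ),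
        Real.exp (-(2 * x * c) * s) * qk s * jim t (2 * x * b) := by
    rw [← integral_const_mul]
    refine setIntegral_congr_fun measurableSet_Ioi fun x hx => ?_
    rw [Wk_eq hx hc, integral_mul_const]
    ring
  rw [h1, integral_integral_swap hint]
  set L : ℝ → ℝ := fun p => ∫ y in Set.Ioi (0:ℝ), Real.exp (-p * y) * jim t y with hL
  have h2 : ∀ s ∈ Set.Ioi (0:ℝ), (∫ x in Set.Ioi (0:ℝ),
      Real.exp (-(2 * x * c) * s) * qk s * jim t (2 * x * b)) =
      (2 * b)⁻¹ * ((fun s' => qk (b / c * s') * L s') (c / b * s)) := by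
    intro s hs
    have := integral_comp_mul_left_Ioi (fun y => Real.exp (-(c / b * s) * y) * jim t y) 0
      (b := 2 * b) (by positivity)
    simp only [mul_zero, smul_eq_mul] at this
    simp only [hL]
    rw [mul_left_comm, ← this, ← integral_const_mul]
    congr 1
    ext x
    have e1 : b / c * (c / b * s) = s := by field_simp
    have e2 : -(c / b * s) * (2 * b * x) = -(2 * x * c) * s := by field_simp
    rw [e1, e2]
    ring_nf
  rw [setIntegral_congr_fun measurableSet_Ioi h2, integral_const_mul,
    integral_comp_mul_left_Ioi (fun s' => qk (b / c * s') * L s') 0 (b := c / b) (by positivity),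
    mul_zero, smul_eq_mul, ← subst_sinh (fun s' => qk (b / c * s') * L s'), ← mul_assoc, ← mul_assoc, ← integral_const_mul, ← integral_const_mul]
  refine setIntegral_congr_fun measurableSet_Ioi fun r hr => ?_
  have h3 := jim_lap ht hr
  rw [mul_assoc (qk _), h3]
  have e : qk (b / c * Real.sinh r) = b * c ^ 2 * (Real.sinh r / √(c ^ 2 + b ^ 2 * Real.sinh r ^ 2) ^ 3) := by
    unfold qk
    have : √(1 + (b / c * Real.sinh r) ^ 2) = √(c ^ 2 + b ^ 2 * Real.sinh r ^ 2) / c := by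
      rw [eq_div_iff hc.ne', ← Real.sqrt_sq hc.le, ← Real.sqrt_mul (by positivity),
        Real.sqrt_sq hc.le]
      congr 1
      field_simp
    rw [this]
    have : 0 < √(c ^ 2 + b ^ 2 * Real.sinh r ^ 2) := by positivity
    field_simp
  rw [e]
  field_simp

lemma wint {c : ℝ} (hc : 0 < c) (S : ℝ) :
    IntegrableOn (fun w => (√(1 - w))⁻¹ * (√(c ^ 2 + w * S ^ 2) ^ 3)⁻¹) (Set.Ioo 0 1) ∧
    ∫ w in Set.Ioo (0:ℝ) 1, (√(1 - w))⁻¹ * (√(c ^ 2 + w * S ^ 2) ^ 3)⁻¹ =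
      2 / (c * (c ^ 2 + S ^ 2)) := by
  set F : ℝ → ℝ := fun w => -2 / (c ^ 2 + S ^ 2) * (√(1 - w) / √(c ^ 2 + w * S ^ 2)) with hF
  have ha : 0 < c ^ 2 + S ^ 2 := by positivity
  have hcont : ContinuousOn F (Set.Icc 0 1) := by
    apply ContinuousOn.mul (by fun_prop)
    apply ContinuousOn.div (by fun_prop) (by fun_prop)
    intro w hw
    have := hw.1
    positivity
  have hd : ∀ w ∈ Set.Ioo (0:ℝ) 1, HasDerivAt F ((√(1 - w))⁻¹ * (√(c ^ 2 + w * S ^ 2) ^ 3)⁻¹) w := by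
    intro w hw
    have h0 := hw.1
    have h1 : 0 < 1 - w := by linarith [hw.2]
    have hQ : 0 < c ^ 2 + w * S ^ 2 := by positivity
    have d1 : HasDerivAt (fun w : ℝ => 1 - w) (-1) w := (hasDerivAt_id w).const_sub 1
    have d2 : HasDerivAt (fun w : ℝ => c ^ 2 + w * S ^ 2) (S ^ 2) w := by
      simpa using ((hasDerivAt_id w).mul_const (S ^ 2)).const_add (c ^ 2)
    have d := ((d1.sqrt h1.ne').div (d2.sqrt hQ.ne') (Real.sqrt_pos.2 hQ).ne').const_mul
      (-2 / (c ^ 2 + S ^ 2))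
    refine d.congr_deriv ?_
    have e1 := Real.sq_sqrt h1.le
    have e2 := Real.sq_sqrt hQ.le
    have p1 := Real.sqrt_pos.2 h1
    have p2 := Real.sqrt_pos.2 hQ
    generalize √(1 - w) = A at *
    generalize √(c ^ 2 + w * S ^ 2) = B at *
    field_simp
    rw [e1, e2]
    ring
  have hi := intervalIntegral.integrableOn_deriv_of_nonneg hcont hd (fun w _ => by positivity)
  have hii : IntervalIntegrable (fun w => (√(1 - w))⁻¹ * (√(c ^ 2 + w * S ^ 2) ^ 3)⁻¹) volume 0 1 := by
    rw [intervalIntegrable_iff_integrableOn_Ioc_of_le zero_le_one]; exact hi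
  refine ⟨hi.mono_set Set.Ioo_subset_Ioc_self, ?_⟩
  have := intervalIntegral.integral_eq_sub_of_hasDerivAt_of_le zero_le_one hcont hd hii
  rw [intervalIntegral.integral_of_le zero_le_one, integral_Ioc_eq_integral_Ioo] at this
  rw [this]
  simp only [hF]
  simp [Real.sqrt_sq hc.le]
  field_simp

lemma sech_int : Integrable (fun w : ℝ => (Real.cosh w)⁻¹) := by
  have h := integrable_inv_one_add_sq
  refine Integrable.mono' (h.const_mul 2) (by
    apply Continuous.aestronglyMeasurable
    exact Real.continuous_cosh.inv₀ fun x => (Real.cosh_pos x).ne') ?_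
  filter_upwards with w
  have hc : 1 + w ^ 2 / 2 ≤ Real.cosh w := by
    have h1 := Real.cosh_two_mul (w / 2)
    rw [show 2 * (w / 2) = w by ring, Real.cosh_sq] at h1
    have h2 : |w / 2| ≤ Real.sinh |w / 2| := Real.self_le_sinh_iff.2 (abs_nonneg _)
    have h3 : (w / 2) ^ 2 ≤ Real.sinh (w / 2) ^ 2 := by
      rw [← sq_abs (w / 2), ← sq_abs (Real.sinh (w / 2)), Real.abs_sinh]
      exact pow_le_pow_left₀ (abs_nonneg _) h2 2
    nlinarith
  rw [Real.norm_of_nonneg (inv_nonneg.2 (Real.cosh_pos w).le), ← div_eq_mul_inv,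
    inv_le_comm₀ (Real.cosh_pos w) (by positivity), inv_div]
  linarith

lemma sech_ft (τ : ℝ) :
    ∫ w : ℝ, Complex.exp ((2 * τ * w : ℝ) * Complex.I) * ((Real.cosh w)⁻¹ : ℝ) =
      (Real.pi / Real.cosh (Real.pi * τ) : ℝ) := by
  set f : ℝ → ℝ := fun w => 1 / (1 + Real.exp (-2 * w)) with hf
  set f' : ℝ → ℝ := fun w => 2 * Real.exp (-2 * w) / (1 + Real.exp (-2 * w)) ^ 2 with hf'
  have hd : ∀ w, HasDerivAt f (f' w) w := by
    intro w
    have h1 : HasDerivAt (fun w : ℝ => 1 + Real.exp (-2 * w)) (Real.exp (-2 * w) * -2) w := by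
      have := (((hasDerivAt_id w).const_mul (-2)).exp).const_add 1
      simpa using this
    have := h1.fun_inv (by positivity)
    simp only [hf, one_div]
    refine this.congr_deriv ?_
    simp only [hf']
    ring
  have him : f '' Set.univ = Set.Ioo 0 1 := by
    ext y
    simp only [Set.image_univ, Set.mem_range, hf]
    constructor
    · rintro ⟨w, rfl⟩
      have := Real.exp_pos (-2 * w)
      refine ⟨by positivity, ?_⟩
      rw [div_lt_one (by positivity)]
      linarith
    · rintro ⟨h0, h1⟩
      refine ⟨-(Real.log (1 / y - 1)) / 2, ?_⟩
      have : 0 < 1 / y - 1 := by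
        have : 1 < 1 / y := by rw [lt_div_iff₀ h0]; linarith
        linarith
      rw [show -2 * (-(Real.log (1 / y - 1)) / 2) = Real.log (1 / y - 1) by ring, Real.exp_log this]
      simp
  have hinj : Set.InjOn f Set.univ := by
    intro a _ b _ h
    simp only [hf, one_div] at h
    have h2 := inv_injective h
    have h3 := Real.exp_injective (add_left_cancel h2)
    linarith
  have hs := integral_image_eq_integral_abs_deriv_smul (s := Set.univ) (f := f) (f' := f')
    MeasurableSet.univ (fun x _ => (hd x).hasDerivWithinAt) hinj
    (fun y : ℝ => (y : ℂ) ^ ((1 / 2 + τ * Complex.I : ℂ) - 1) *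
      (1 - (y : ℂ)) ^ ((1 / 2 - τ * Complex.I : ℂ) - 1))
  rw [him, Measure.restrict_univ] at hs
  have hu : 0 < (1 / 2 + τ * Complex.I : ℂ).re := by simp
  have hv : 0 < (1 / 2 - τ * Complex.I : ℂ).re := by simp
  have hb := Complex.Gamma_mul_Gamma_eq_betaIntegral hu hv
  unfold Complex.betaIntegral at hb
  rw [intervalIntegral.integral_of_le zero_le_one, integral_Ioc_eq_integral_Ioo, hs,
    show (1 / 2 + τ * Complex.I + (1 / 2 - τ * Complex.I) : ℂ) = 1 by ring, Complex.Gamma_one, one_mul,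
    show (1 / 2 - τ * Complex.I : ℂ) = 1 - (1 / 2 + τ * Complex.I) by ring,
    Complex.Gamma_mul_Gamma_one_sub] at hb
  have hsin : Complex.sin (Real.pi * (1 / 2 + τ * Complex.I)) = (Real.cosh (Real.pi * τ) : ℝ) := by
    rw [show (Real.pi : ℂ) * (1 / 2 + τ * Complex.I) = ((Real.pi * τ : ℝ) : ℂ) * Complex.I + Real.pi / 2 by
      push_cast; ring, Complex.sin_add_pi_div_two, Complex.cos_mul_I, Complex.ofReal_cosh]
  rw [hsin] at hb
  rw [Complex.ofReal_div, hb]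
  congr 1
  ext w
  have hE := Real.exp_pos (-2 * w)
  have hy0 : 0 < f w := by simp only [hf]; positivity
  have hy1 : 1 - f w = Real.exp (-2 * w) * f w := by simp only [hf]; field_simp; ring
  have hy1p : 0 < 1 - f w := by rw [hy1]; positivity
  rw [show (1 - (f w : ℂ)) = ((1 - f w : ℝ) : ℂ) by push_cast; ring]
  rw [Complex.cpow_def_of_ne_zero (by exact_mod_cast hy0.ne'),
    Complex.cpow_def_of_ne_zero (by exact_mod_cast hy1p.ne'), ← Complex.ofReal_log hy0.le,
    ← Complex.ofReal_log hy1p.le, ← Complex.exp_add, hy1, Real.log_mul hE.ne' hy0.ne', Real.log_exp]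
  rw [show ((Real.log (f w) : ℝ) : ℂ) * (1 / 2 + τ * Complex.I - 1) +
     ((-2 * w + Real.log (f w) : ℝ) : ℂ) * (1 - (1 / 2 + τ * Complex.I) - 1) =
     ((2 * τ * w : ℝ) : ℂ) * Complex.I + ((w - Real.log (f w) : ℝ) : ℂ) by push_cast; ring]
  rw [Complex.exp_add, ← Complex.ofReal_exp (w - Real.log (f w)), Real.exp_sub, Real.exp_log hy0,
    Complex.real_smul, mul_left_comm, ← Complex.ofReal_mul]
  congr 2
  have hfp : 0 < f' w := by simp only [hf']; positivity
  rw [abs_of_pos hfp]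
  simp only [hf, hf']
  rw [Real.cosh_eq]
  have e1 : Real.exp (-2 * w) = Real.exp (-w) ^ 2 := by rw [← Real.exp_nat_mul]; congr 1; push_cast; ring
  have e2 : Real.exp w * Real.exp (-w) = 1 := by rw [← Real.exp_add]; simp
  rw [e1]
  have e3 : Real.exp w = (Real.exp (-w))⁻¹ := eq_inv_of_mul_eq_one_left e2
  have := Real.exp_pos (-w)
  rw [e3]
  generalize Real.exp (-w) = E at *
  field_simp

lemma sech_diff {u : ℝ} (hu : 0 < u) (r : ℝ) :
    Real.sinh r / (Real.cosh u ^ 2 + Real.sinh r ^ 2) =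
      (2 * Real.sinh u)⁻¹ * ((Real.cosh (r - u))⁻¹ - (Real.cosh (r + u))⁻¹) := by
  have h1 := Real.cosh_pos (r - u)
  have h2 := Real.cosh_pos (r + u)
  have h3 : 0 < Real.sinh u := Real.sinh_pos_iff.2 hu
  have h4 : Real.cosh u ^ 2 + Real.sinh r ^ 2 = Real.cosh (r - u) * Real.cosh (r + u) := by
    rw [Real.cosh_sub, Real.cosh_add]
    have e1 := Real.cosh_sq r
    have e2 := Real.cosh_sq u
    ring_nf
    rw [e1, e2]
    ring
  have h5 : 2 * (Real.sinh r * Real.sinh u) = Real.cosh (r + u) - Real.cosh (r - u) := by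
    rw [Real.cosh_sub, Real.cosh_add]; ring
  rw [h4]
  field_simp
  linarith

lemma rint (τ : ℝ) {u : ℝ} (hu : 0 < u) :
    ∫ r in Set.Ioi (0:ℝ), Real.sin (2 * τ * r) * (Real.sinh r / (Real.cosh u ^ 2 + Real.sinh r ^ 2)) =
      Real.sin (2 * τ * u) * Real.pi / (2 * Real.sinh u * Real.cosh (Real.pi * τ)) := by
  have hg1 : Integrable (fun r : ℝ => Real.sin (2 * τ * r) * (Real.cosh (r - u))⁻¹) := by
    refine (sech_int.comp_sub_right u).bdd_mul (c := 1) (by fun_prop) ?_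
    filter_upwards with r
    exact Real.abs_sin_le_one _
  have hg2 : Integrable (fun r : ℝ => Real.sin (2 * τ * r) * (Real.cosh (r + u))⁻¹) := by
    refine (sech_int.comp_add_right u).bdd_mul (c := 1) (by fun_prop) ?_
    filter_upwards with r
    exact Real.abs_sin_le_one _
  have h1 : ∫ r in Set.Ioi (0:ℝ), Real.sin (2 * τ * r) * (Real.sinh r / (Real.cosh u ^ 2 + Real.sinh r ^ 2)) =
      (2 * Real.sinh u)⁻¹ * ∫ r in Set.Ioi (0:ℝ), (Real.sin (2 * τ * r) * (Real.cosh (r - u))⁻¹ -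
        Real.sin (2 * τ * r) * (Real.cosh (r + u))⁻¹) := by
    rw [← integral_const_mul]
    congr 1
    ext r
    rw [sech_diff hu]
    ring
  have h2 : ∫ r in Set.Ioi (0:ℝ), Real.sin (2 * τ * r) * (Real.cosh (r + u))⁻¹ =
      - ∫ r in Set.Iic (0:ℝ), Real.sin (2 * τ * r) * (Real.cosh (r - u))⁻¹ := by
    have := integral_comp_neg_Ioi 0 (fun r => Real.sin (2 * τ * r) * (Real.cosh (r - u))⁻¹)
    rw [neg_zero] at this
    rw [← this, ← integral_neg]
    congr 1
    ext r
    rw [show -r - u = -(r + u) by ring, Real.cosh_neg, mul_neg, Real.sin_neg]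
    ring
  have h3 : ∫ r : ℝ, Real.sin (2 * τ * r) * (Real.cosh (r - u))⁻¹ =
      Real.sin (2 * τ * u) * (Real.pi / Real.cosh (Real.pi * τ)) := by
    have hs := sech_ft τ
    rw [← integral_sub_right_eq_self _ u] at hs
    have hs2 := congrArg (fun z => Complex.exp ((2 * τ * u : ℝ) * Complex.I) * z) hs
    rw [← integral_const_mul] at hs2
    have e : ∀ r : ℝ, Complex.exp ((2 * τ * u : ℝ) * Complex.I) *
        (Complex.exp ((2 * τ * (r - u) : ℝ) * Complex.I) * ((Real.cosh (r - u))⁻¹ : ℝ)) =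
        Complex.exp ((2 * τ * r : ℝ) * Complex.I) * ((Real.cosh (r - u))⁻¹ : ℝ) := by
      intro r
      rw [← mul_assoc, ← Complex.exp_add]
      congr 2
      push_cast
      ring
    simp_rw [e] at hs2
    have hi : Integrable (fun r : ℝ => Complex.exp ((2 * τ * r : ℝ) * Complex.I) *
        (((Real.cosh (r - u))⁻¹ : ℝ) : ℂ)) := by
      refine ((sech_int.comp_sub_right u).ofReal (𝕜 := ℂ)).bdd_mul (c := 1) (by fun_prop) ?_
      filter_upwards with r
      rw [Complex.norm_exp_ofReal_mul_I]
    have h4 := integral_im hi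
    simp only [RCLike.im_to_complex, Complex.im_mul_ofReal, Complex.exp_ofReal_mul_I_im] at h4
    rw [h4, hs2, Complex.im_mul_ofReal, Complex.exp_ofReal_mul_I_im]
  rw [h1, integral_sub hg1.integrableOn hg2.integrableOn, h2, sub_neg_eq_add, add_comm,
    ← Set.compl_Iic, integral_add_compl measurableSet_Iic hg1, h3]
  have h5 : 0 < Real.sinh u := Real.sinh_pos_iff.2 hu
  have := Real.cosh_pos (Real.pi * τ)
  field_simp

lemma jsq_im {τ x : ℝ} (hτ : 0 < τ) (hx : 0 < x) :
    (besselJ ((τ : ℂ) * Complex.I) x ^ 2).im =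
      1 / Real.pi * ∫ w in Set.Ioo (0:ℝ) 1, rho w * jim (2 * τ) (2 * x * √w) := by
  rw [prod_formula hx]
  have h2 : 0 < 2 * τ := by positivity
  have hi : IntegrableOn (fun w : ℝ => (rho w : ℂ) * besselJ (((2 * τ : ℝ) : ℂ) * Complex.I) (2 * x * √w))
      (Set.Ioo 0 1) := by
    refine Integrable.mul_bdd (c := √(bK (2 * τ))) (rho_integrable.ofReal) ?_ ?_
    · apply ContinuousOn.aestronglyMeasurable _ measurableSet_Ioo
      refine (besselJ_contOn (re_tI _)).comp (by fun_prop) ?_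
      intro w hw
      have := Real.sqrt_pos.2 hw.1
      simp only [Set.mem_Ioi]
      positivity
    · filter_upwards [ae_restrict_mem measurableSet_Ioo] with w hw
      have := Real.sqrt_pos.2 hw.1
      exact besselJ_le h2 (by positivity)
  have h := integral_im hi
  simp only [RCLike.im_to_complex, Complex.im_ofReal_mul] at h
  rw [show (1 / Real.pi : ℂ) = ((1 / Real.pi : ℝ) : ℂ) by push_cast; rfl, Complex.im_ofReal_mul, ← h]
  rfl

lemma Psi {τ u : ℝ} (hτ : 0 < τ) (hu : 0 < u) :
    ∫ x in Set.Ioi (0:ℝ), Wk x (Real.cosh u) * (besselJ ((τ : ℂ) * Complex.I) x ^ 2).im =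
      Real.sin (2 * τ * u) / (2 * Real.pi * Real.cosh u * Real.sinh u * Real.cosh (Real.pi * τ)) := by
  have hpi := Real.pi_pos
  have h2 : 0 < 2 * τ := by positivity
  set c := Real.cosh u with hc
  have hc1 : 1 ≤ c := Real.one_le_cosh u
  have hc0 : 0 < c := by linarith
  -- step 1
  have hint1 : Integrable (Function.uncurry fun x w : ℝ =>
      Wk x c * (rho w * jim (2 * τ) (2 * x * √w)))
      ((volume.restrict (Set.Ioi 0)).prod (volume.restrict (Set.Ioo 0 1))) := by
    have hD : IntegrableOn (fun x : ℝ => 2 * (1 + x ^ 2)⁻¹) (Set.Ioi 0) :=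
      (integrable_inv_one_add_sq.const_mul 2).integrableOn
    have hR : IntegrableOn (fun w : ℝ => rho w * √(bK (2 * τ))) (Set.Ioo 0 1) :=
      rho_integrable.mul_const _
    refine Integrable.mono' (hD.mul_prod hR) ?_ ?_
    · have m1 : Measurable (fun p : ℝ × ℝ => Wk p.1 c) :=
        Wk_meas.comp (measurable_fst.prodMk measurable_const)
      have m2 : Measurable (fun p : ℝ × ℝ => rho p.2) := by
        unfold rho
        fun_prop
      refine m1.aestronglyMeasurable.mul (m2.aestronglyMeasurable.mul ?_)
      rw [Measure.prod_restrict]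
      apply ContinuousOn.aestronglyMeasurable _ (measurableSet_Ioi.prod measurableSet_Ioo)
      refine (jim_contOn _).comp (by fun_prop) ?_
      rintro ⟨x, w⟩ ⟨hx, hw⟩
      have := Real.sqrt_pos.2 hw.1
      have h0 : (0:ℝ) < x := hx
      simp only [Set.mem_Ioi]
      positivity
    · rw [Measure.prod_restrict]
      filter_upwards [ae_restrict_mem (measurableSet_Ioi.prod measurableSet_Ioo)] with p hp
      obtain ⟨hx, hw⟩ := hp
      have := Real.sqrt_pos.2 hw.1
      have h0 : (0:ℝ) < p.1 := hx
      simp only [Function.uncurry]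
      rw [norm_mul, norm_mul, Real.norm_of_nonneg (rho_nonneg _)]
      have b1 := Wk_le h0 hc1
      have b2 := jim_le h2 (y := 2 * p.1 * √p.2) (by positivity)
      have b3 := rho_nonneg p.2
      rw [Real.norm_eq_abs, Real.norm_eq_abs]
      gcongr
  have s1 : ∫ x in Set.Ioi (0:ℝ), Wk x c * (besselJ ((τ : ℂ) * Complex.I) x ^ 2).im =
      1 / Real.pi * ∫ x in Set.Ioi (0:ℝ), ∫ w in Set.Ioo (0:ℝ) 1,
        Wk x c * (rho w * jim (2 * τ) (2 * x * √w)) := by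
    rw [← integral_const_mul]
    refine setIntegral_congr_fun measurableSet_Ioi fun x hx => ?_
    beta_reduce
    rw [jsq_im hτ hx, integral_const_mul]
    ring
  rw [s1, integral_integral_swap hint1]
  -- step 2
  have s2 : ∫ w in Set.Ioo (0:ℝ) 1, ∫ x in Set.Ioi (0:ℝ), Wk x c * (rho w * jim (2 * τ) (2 * x * √w)) =
      1 / (2 * Real.pi) * ∫ w in Set.Ioo (0:ℝ) 1, ∫ r in Set.Ioi (0:ℝ),
        (Real.sin (2 * τ * r) * Real.sinh r) *
          ((√(1 - w))⁻¹ * (√(c ^ 2 + w * Real.sinh r ^ 2) ^ 3)⁻¹) := by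
    rw [← integral_const_mul]
    refine setIntegral_congr_fun measurableSet_Ioo fun w hw => ?_
    beta_reduce
    have hw0 := Real.sqrt_pos.2 hw.1
    have := inner_formula h2 hw0 hc0
    calc _ = rho w * ∫ x in Set.Ioi (0:ℝ), Wk x c * jim (2 * τ) (2 * x * √w) := by
          rw [← integral_const_mul]; congr 1; ext x; ring
      _ = _ := by
        rw [this, Real.sq_sqrt hw.1.le, ← mul_assoc, ← integral_const_mul, ← integral_const_mul]
        congr 1
        ext r
        unfold rho
        field_simp
  rw [s2]
  -- step 3
  have hint2 : Integrable (Function.uncurry fun w r : ℝ =>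
      (Real.sin (2 * τ * r) * Real.sinh r) *
          ((√(1 - w))⁻¹ * (√(c ^ 2 + w * Real.sinh r ^ 2) ^ 3)⁻¹))
      ((volume.restrict (Set.Ioo 0 1)).prod (volume.restrict (Set.Ioi 0))) := by
    have hm : AEStronglyMeasurable (Function.uncurry fun w r : ℝ =>
      (Real.sin (2 * τ * r) * Real.sinh r) *
          ((√(1 - w))⁻¹ * (√(c ^ 2 + w * Real.sinh r ^ 2) ^ 3)⁻¹))
      ((volume.restrict (Set.Ioo 0 1)).prod (volume.restrict (Set.Ioi 0))) := by
      apply Measurable.aestronglyMeasurable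
      unfold Function.uncurry
      fun_prop
    rw [integrable_prod_iff' hm]
    constructor
    · filter_upwards with r
      exact (wint hc0 (Real.sinh r)).1.const_mul (Real.sin (2 * τ * r) * Real.sinh r)
    · have hb : IntegrableOn (fun r : ℝ => 2 / c * (Real.cosh r)⁻¹) (Set.Ioi 0) :=
        (sech_int.const_mul _).integrableOn
      refine Integrable.mono' hb hm.norm.prod_swap.integral_prod_right' ?_
      filter_upwards [ae_restrict_mem measurableSet_Ioi] with r hr
      rw [Real.norm_of_nonneg (integral_nonneg fun _ => norm_nonneg _)]
      simp only [Function.uncurry]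
      have hsr : 0 < Real.sinh r := Real.sinh_pos_iff.2 hr
      have hcr := Real.cosh_pos r
      calc _ = |Real.sin (2 * τ * r) * Real.sinh r| * ∫ w in Set.Ioo (0:ℝ) 1,
            (√(1 - w))⁻¹ * (√(c ^ 2 + w * Real.sinh r ^ 2) ^ 3)⁻¹ := by
            rw [← integral_const_mul]
            congr 1
            ext w
            rw [norm_mul, Real.norm_eq_abs, Real.norm_of_nonneg (r := (√(1 - w))⁻¹ * _) (by positivity)]
        _ ≤ (1 * Real.sinh r) * (2 / (c * (c ^ 2 + Real.sinh r ^ 2))) := by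
            rw [(wint hc0 (Real.sinh r)).2, abs_mul, abs_of_pos hsr]
            gcongr
            exact Real.abs_sin_le_one _
        _ ≤ Real.cosh r * (2 / (c * Real.cosh r ^ 2)) := by
            rw [one_mul]
            have : Real.cosh r ^ 2 ≤ c ^ 2 + Real.sinh r ^ 2 := by
              rw [Real.cosh_sq]; nlinarith
            gcongr
            exact (Real.sinh_lt_cosh r).le
        _ = _ := by field_simp
  rw [integral_integral_swap hint2]
  have s3 : ∫ r in Set.Ioi (0:ℝ), ∫ w in Set.Ioo (0:ℝ) 1, (Real.sin (2 * τ * r) * Real.sinh r) *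
          ((√(1 - w))⁻¹ * (√(c ^ 2 + w * Real.sinh r ^ 2) ^ 3)⁻¹) =
      2 / c * ∫ r in Set.Ioi (0:ℝ), Real.sin (2 * τ * r) * (Real.sinh r / (c ^ 2 + Real.sinh r ^ 2)) := by
    rw [← integral_const_mul]
    congr 1
    ext r
    rw [integral_const_mul, (wint hc0 _).2]
    have : 0 < c ^ 2 + Real.sinh r ^ 2 := by positivity
    field_simp
  rw [s3, hc, rint τ hu]
  have h5 : 0 < Real.sinh u := Real.sinh_pos_iff.2 hu
  have h6 := Real.cosh_pos (Real.pi * τ)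
  have h7 := Real.cosh_pos u
  field_simp

noncomputable def hfun (m : ℕ) (x : ℝ) : ℝ :=
  (besselJ ((((m + 1 : ℝ) / 2 : ℝ) : ℂ) * Complex.I) x ^ 2).im / Real.sinh (Real.pi * ((m + 1) / 2))

lemma hfun_le (m : ℕ) {x : ℝ} (hx : 0 < x) : |hfun m x| ≤ 2 := by
  have hm : (0:ℝ) ≤ m := by positivity
  have ht : (0:ℝ) < (m + 1) / 2 := by positivity
  have hpi := Real.pi_gt_three
  have hs : 0 < Real.sinh (Real.pi * ((m + 1) / 2)) := Real.sinh_pos_iff.2 (by positivity)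
  unfold hfun
  rw [abs_div, abs_of_pos hs, div_le_iff₀ hs]
  have h1 := besselJ_sq_le ht hx
  rw [← norm_pow] at h1
  refine (Complex.abs_im_le_norm _).trans (h1.trans ?_)
  unfold bK
  gcongr
  apply div_le_self hs.le
  nlinarith

lemma hfun_cont (m : ℕ) : ContinuousOn (hfun m) (Set.Ioi 0) := by
  unfold hfun
  apply ContinuousOn.div_const
  exact Complex.continuous_im.comp_continuousOn ((besselJ_contOn (re_tI _)).pow 2)

noncomputable def Gk (n : ℕ) (x u : ℝ) : ℝ := Wk x (Real.cosh u) * Real.sinh (2 * u) * Real.sin (n * u)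

noncomputable def Om (n : ℕ) (x : ℝ) : ℝ := ∫ u in Set.Ioc 0 Real.pi, Gk n x u

lemma Gk_int (n : ℕ) : Integrable (Function.uncurry (Gk n))
    ((volume.restrict (Set.Ioi 0)).prod (volume.restrict (Set.Ioc 0 Real.pi))) := by
  have hD : IntegrableOn (fun x : ℝ => 2 * (1 + x ^ 2)⁻¹) (Set.Ioi 0) :=
    (integrable_inv_one_add_sq.const_mul 2).integrableOn
  have hS : IntegrableOn (fun u : ℝ => |Real.sinh (2 * u)|) (Set.Ioc 0 Real.pi) := by
    have : Continuous (fun u : ℝ => |Real.sinh (2 * u)|) := by fun_prop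
    exact (this.integrableOn_Icc).mono_set Set.Ioc_subset_Icc_self
  refine Integrable.mono' (hD.mul_prod hS) ?_ ?_
  · apply Measurable.aestronglyMeasurable
    unfold Function.uncurry Gk
    have m1 : Measurable (fun p : ℝ × ℝ => Wk p.1 (Real.cosh p.2)) :=
      Wk_meas.comp (measurable_fst.prodMk (Real.measurable_cosh.comp measurable_snd))
    fun_prop
  · rw [Measure.prod_restrict]
    filter_upwards [ae_restrict_mem (measurableSet_Ioi.prod measurableSet_Ioc)] with p hp
    have h0 : (0:ℝ) < p.1 := hp.1
    unfold Function.uncurry Gk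
    rw [Real.norm_eq_abs, abs_mul, abs_mul]
    have b1 := Wk_le h0 (Real.one_le_cosh p.2)
    have b2 := Real.abs_sin_le_one (n * p.2)
    calc _ ≤ (2 * (1 + p.1 ^ 2)⁻¹) * |Real.sinh (2 * p.2)| * 1 := by gcongr
      _ = _ := by ring

lemma Om_int (n : ℕ) : IntegrableOn (Om n) (Set.Ioi 0) := (Gk_int n).integral_prod_left

lemma cosint {j : ℤ} (hj : j ≠ 0) : ∫ u in (0:ℝ)..Real.pi, Real.cos (j * u) = 0 := by
  have h : (j:ℝ) ≠ 0 := by exact_mod_cast hj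
  rw [intervalIntegral.integral_comp_mul_left _ h, integral_cos]
  simp [Real.sin_int_mul_pi]

lemma sinsin (m n : ℕ) (hn : 1 ≤ n) :
    ∫ u in (0:ℝ)..Real.pi, Real.sin ((m + 1) * u) * Real.sin (n * u) =
      if m + 1 = n then Real.pi / 2 else 0 := by
  have e : ∀ u : ℝ, Real.sin ((m + 1) * u) * Real.sin (n * u) =
      (1 / 2) * (Real.cos (((m + 1 - n : ℤ) : ℝ) * u) - Real.cos (((m + 1 + n : ℤ) : ℝ) * u)) := by
    intro u
    push_cast
    rw [show ((m:ℝ) + 1 - n) * u = (m + 1) * u - n * u by ring,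
      show ((m:ℝ) + 1 + n) * u = (m + 1) * u + n * u by ring, Real.cos_sub, Real.cos_add]
    ring
  simp_rw [e]
  rw [intervalIntegral.integral_const_mul, intervalIntegral.integral_sub
    (by apply Continuous.intervalIntegrable; fun_prop) (by apply Continuous.intervalIntegrable; fun_prop),
    cosint (j := m + 1 + n) (by positivity)]
  split_ifs with h
  · subst h
    simp
    ring
  · rw [cosint (j := m + 1 - n) (by omega)]
    simp

lemma Om_h (n m : ℕ) (hn : 1 ≤ n) :
    ∫ x in Set.Ioi (0:ℝ), Om n x * hfun m x =
      if m + 1 = n then (Real.sinh (Real.pi * n))⁻¹ else 0 := by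
  have hpi := Real.pi_pos
  have ht : (0:ℝ) < (m + 1) / 2 := by positivity
  have hint : Integrable (Function.uncurry fun x u => Gk n x u * hfun m x)
    ((volume.restrict (Set.Ioi 0)).prod (volume.restrict (Set.Ioc 0 Real.pi))) := by
    refine (Gk_int n).mul_bdd (c := 2)
      ((hfun_cont m).aestronglyMeasurable measurableSet_Ioi).comp_fst ?_
    rw [Measure.prod_restrict]
    filter_upwards [ae_restrict_mem (measurableSet_Ioi.prod measurableSet_Ioc)] with p hp
    exact hfun_le m hp.1
  have s1 : ∫ x in Set.Ioi (0:ℝ), Om n x * hfun m x =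
      ∫ x in Set.Ioi (0:ℝ), ∫ u in Set.Ioc 0 Real.pi, Gk n x u * hfun m x := by
    congr 1
    ext x
    rw [integral_mul_const]
    rfl
  rw [s1, integral_integral_swap hint]
  have s2 : ∀ u ∈ Set.Ioc 0 Real.pi, ∫ x in Set.Ioi (0:ℝ), Gk n x u * hfun m x =
      2 / (Real.pi * Real.sinh (Real.pi * (m + 1))) * (Real.sin ((m + 1) * u) * Real.sin (n * u)) := by
    intro u hu
    have hP := Psi ht hu.1
    have e1 : Real.sinh (Real.pi * (m + 1)) =
        2 * Real.sinh (Real.pi * ((m + 1) / 2)) * Real.cosh (Real.pi * ((m + 1) / 2)) := by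
      rw [← Real.sinh_two_mul]; congr 1; ring
    have hs : 0 < Real.sinh (Real.pi * ((m + 1) / 2)) := Real.sinh_pos_iff.2 (by positivity)
    have hs2 : 0 < Real.sinh u := Real.sinh_pos_iff.2 hu.1
    have hc := Real.cosh_pos (Real.pi * ((m + 1) / 2))
    have hc2 := Real.cosh_pos u
    calc _ = (Real.sinh (2 * u) * Real.sin (n * u) / Real.sinh (Real.pi * ((m + 1) / 2))) *
        ∫ x in Set.Ioi (0:ℝ), Wk x (Real.cosh u) *
          (besselJ ((((m + 1 : ℝ) / 2 : ℝ) : ℂ) * Complex.I) x ^ 2).im := by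
          rw [← integral_const_mul]
          congr 1
          ext x
          unfold Gk hfun
          ring
      _ = _ := by
        rw [hP, e1, Real.sinh_two_mul, show 2 * (((m:ℝ) + 1) / 2) * u = (m + 1) * u by ring]
        field_simp
  rw [setIntegral_congr_fun measurableSet_Ioc s2, integral_const_mul,
    ← intervalIntegral.integral_of_le hpi.le, sinsin m n hn]
  split_ifs with h
  · subst h
    push_cast
    have hs : 0 < Real.sinh (Real.pi * (m + 1)) := Real.sinh_pos_iff.2 (by positivity)
    field_simp
  · simp

theorem statement4 (a : ℕ → ℂ) (ha : Summable fun n : ℕ => ‖a (n + 1)‖)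
    (f : ℝ → ℂ)
    (hf : ∀ x : ℝ, 0 < x → f x = ∑' n : ℕ,
      a (n + 1) / (Real.sinh (Real.pi * (n + 1) / 2) : ℂ) *
        ((((besselJ (Complex.I * (n + 1) / 2) x) ^ 2).im : ℂ)))
    (Ω : ℕ → ℝ → ℝ)
    (hΩ : ∀ (n : ℕ) (x : ℝ), Ω n x = ∫ u in (0 : ℝ)..Real.pi,
      (x * struveK0 (2 * x * Real.cosh u) - 1 / (Real.pi * Real.cosh u)) *
        Real.sinh (2 * u) * Real.sin (n * u)) :
    (∀ x : ℝ, 0 < x → Summable fun n : ℕ => ‖a (n + 1) / (Real.sinh (Real.pi * (n + 1) / 2) : ℂ) *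
      ((((besselJ (Complex.I * (n + 1) / 2) x) ^ 2).im : ℂ))‖) ∧
    ∀ n : ℕ, 1 ≤ n →
      IntegrableOn (fun x : ℝ => (Ω n x : ℂ) * f x) (Set.Ioi (0 : ℝ)) ∧
      a n = ((Real.sinh (Real.pi * n) : ℝ) : ℂ) * ∫ x in Set.Ioi (0 : ℝ), (Ω n x : ℂ) * f x := by
  have hterm : ∀ (m : ℕ) (x : ℝ), a (m + 1) / (Real.sinh (Real.pi * (m + 1) / 2) : ℂ) *
      ((((besselJ (Complex.I * (m + 1) / 2) x) ^ 2).im : ℂ)) = a (m + 1) * (hfun m x : ℂ) := by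
    intro m x
    unfold hfun
    rw [show Complex.I * (m + 1) / 2 = (((m + 1 : ℝ) / 2 : ℝ) : ℂ) * Complex.I by push_cast; ring,
      show Real.pi * (m + 1) / 2 = Real.pi * ((m + 1) / 2) by ring]
    generalize (besselJ ((((m + 1 : ℝ) / 2 : ℝ) : ℂ) * Complex.I) x ^ 2).im = A
    generalize Real.sinh (Real.pi * ((m + 1) / 2)) = B
    push_cast
    ring
  simp_rw [hterm] at hf ⊢
  have hle : ∀ (m : ℕ) (x : ℝ), 0 < x → ‖a (m + 1) * (hfun m x : ℂ)‖ ≤ ‖a (m + 1)‖ * 2 := by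
    intro m x hx
    rw [norm_mul, Complex.norm_real]
    gcongr
    exact hfun_le m hx
  have hsum := ha.mul_right 2
  refine ⟨fun x hx => Summable.of_nonneg_of_le (fun _ => norm_nonneg _) (fun m => hle m x hx) hsum, ?_⟩
  intro n hn
  have hOm : Ω n = Om n := by
    ext x
    rw [hΩ, intervalIntegral.integral_of_le Real.pi_pos.le]
    rfl
  rw [hOm]
  have hfc : ContinuousOn f (Set.Ioi 0) := by
    have : ContinuousOn (fun x => ∑' m : ℕ, a (m + 1) * (hfun m x : ℂ)) (Set.Ioi 0) := by
      refine continuousOn_tsum (fun m => ?_) hsum (fun m x hx => hle m x hx)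
      exact continuousOn_const.mul (Complex.continuous_ofReal.comp_continuousOn (hfun_cont m))
    exact this.congr (fun x hx => hf x hx)
  have hO : IntegrableOn (fun x => (Om n x : ℂ)) (Set.Ioi 0) := (Om_int n).ofReal
  constructor
  · refine Integrable.mul_bdd (c := ∑' m : ℕ, ‖a (m + 1)‖ * 2) hO
      (hfc.aestronglyMeasurable measurableSet_Ioi) ?_
    filter_upwards [ae_restrict_mem measurableSet_Ioi] with x hx
    rw [hf x hx]
    exact tsum_of_norm_bounded hsum.hasSum (fun m => hle m x hx)
  · have hFi : ∀ m : ℕ, IntegrableOn (fun x => (Om n x : ℂ) * (a (m + 1) * (hfun m x : ℂ))) (Set.Ioi 0) := by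
      intro m
      refine Integrable.mul_bdd (c := ‖a (m + 1)‖ * 2) hO ?_ ?_
      · exact (continuousOn_const.mul
          (Complex.continuous_ofReal.comp_continuousOn (hfun_cont m))).aestronglyMeasurable measurableSet_Ioi
      · filter_upwards [ae_restrict_mem measurableSet_Ioi] with x hx
        exact hle m x hx
    have hS := hasSum_integral_of_summable_integral_norm hFi (by
      refine Summable.of_nonneg_of_le (fun _ => integral_nonneg fun _ => norm_nonneg _) (fun m => ?_)
        (hsum.mul_right (∫ x in Set.Ioi (0:ℝ), ‖(Om n x : ℂ)‖))
      rw [← integral_const_mul]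
      refine setIntegral_mono_on (hFi m).norm (hO.norm.const_mul _) measurableSet_Ioi fun x hx => ?_
      rw [norm_mul, mul_comm]
      have := hle m x hx
      gcongr)
    have e1 : ∫ x in Set.Ioi (0:ℝ), (Om n x : ℂ) * f x =
        ∫ x in Set.Ioi (0:ℝ), ∑' m : ℕ, (Om n x : ℂ) * (a (m + 1) * (hfun m x : ℂ)) := by
      refine setIntegral_congr_fun measurableSet_Ioi fun x hx => ?_
      beta_reduce
      rw [hf x hx, tsum_mul_left]
    have e2 : ∀ m : ℕ, ∫ x in Set.Ioi (0:ℝ), (Om n x : ℂ) * (a (m + 1) * (hfun m x : ℂ)) =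
        if m = n - 1 then a n * ((Real.sinh (Real.pi * n))⁻¹ : ℝ) else 0 := by
      intro m
      have : ∫ x in Set.Ioi (0:ℝ), (Om n x : ℂ) * (a (m + 1) * (hfun m x : ℂ)) =
          a (m + 1) * ((∫ x in Set.Ioi (0:ℝ), Om n x * hfun m x : ℝ) : ℂ) := by
        rw [← integral_complex_ofReal, ← integral_const_mul]
        congr 1
        ext x
        push_cast
        ring
      rw [this, Om_h n m hn]
      by_cases h : m + 1 = n
      · have h' : m = n - 1 := by omega
        rw [if_pos h, if_pos h', h]
      · have h' : m ≠ n - 1 := by omega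
        rw [if_neg h, if_neg h']
        simp
    rw [e1, ← hS.tsum_eq]
    simp_rw [e2]
    rw [tsum_ite_eq]
    have hs : Real.sinh (Real.pi * n) ≠ 0 := by
      have : (0:ℝ) < n := by exact_mod_cast hn
      exact (Real.sinh_pos_iff.2 (mul_pos Real.pi_pos this)).ne'
    rw [mul_left_comm, ← Complex.ofReal_mul, mul_inv_cancel₀ hs]
    simp
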